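/- Let w, w′ ∈ Sₙ, let k be a positive integer, and let p, q be positive integers with ℓ(w′) − ℓ(w) = p + q − 1 = m. Then the number of paths w = w⁽⁰⁾, w⁽¹⁾, …, w⁽ᵐ⁾ = w′ of length m in the k-Bruhat order from w to w′ whose labels satisfy w⁽¹⁾(a₁) < ⋯ < w⁽ᵖ⁾(a_p) and w⁽ᵖ⁾(a_p) > w⁽ᵖ⁺¹⁾(a_{p+1}) > ⋯ > w⁽ᵐ⁾(a_m) equals the number of such paths whose labels satisfy w⁽¹⁾(a₁) > ⋯ > w⁽q⁾(a_q) and w⁽q⁾(a_q) < ⋯ < w⁽ᵐ⁾(a_m). -/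

import Mathlib

open Equiv MvPolynomial

attribute [local instance] Classical.propDecidable

namespace SchubertPieri

/-- Position `j ∈ {1,…,N}` (1-indexed) as an element of `Fin N` (0-indexed). -/
def pos (N : ℕ) [NeZero N] (j : ℕ) : Fin N :=
  ⟨(j - 1) % N, Nat.mod_lt _ (Nat.pos_of_ne_zero (NeZero.ne N))⟩

/-- The transposition `t_{a,b}` interchanging positions `a` and `b` (1-indexed). -/
def t (N : ℕ) [NeZero N] (a b : ℕ) : Equiv.Perm (Fin N) :=
  Equiv.swap (pos N a) (pos N b)

/-- The value `w(j)` for `j ∈ {1,…,N}` (1-indexed). -/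
def val {N : ℕ} [NeZero N] (w : Equiv.Perm (Fin N)) (j : ℕ) : ℕ :=
  (w (pos N j) : ℕ) + 1

/-- The length of `w`: its number of inversions. -/
def len {N : ℕ} (w : Equiv.Perm (Fin N)) : ℕ :=
  (Finset.univ.filter fun p : Fin N × Fin N => p.1 < p.2 ∧ w p.2 < w p.1).card

/-- The longest permutation `w₀ : j ↦ N+1-j`. -/
def w0 (N : ℕ) : Equiv.Perm (Fin N) :=
  ⟨Fin.rev, Fin.rev, Fin.rev_rev, Fin.rev_rev⟩

/-- The product `t_{a 0, b 0} ⋯ t_{a (i-1), b (i-1)}`. -/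
def tProd (N : ℕ) [NeZero N] (a b : ℕ → ℕ) (i : ℕ) : Equiv.Perm (Fin N) :=
  ((List.range i).map fun j => t N (a j) (b j)).prod

/-- `r[k,m] = t_{k,k+1} t_{k,k+2} ⋯ t_{k,k+m}`, the (m+1)-cycle with
`r[k,m](k) = k+m` and `r[k,m](j) = j-1` for `k+1 ≤ j ≤ k+m`. -/
def rPerm (N k m : ℕ) [NeZero N] : Equiv.Perm (Fin N) :=
  ((List.range m).map fun i => t N k (k + 1 + i)).prod

/-- `c[k,m] = t_{k,k+1} t_{k-1,k+1} ⋯ t_{k-m+1,k+1}`, the (m+1)-cycle with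
`c[k,m](j) = j+1` for `k-m+1 ≤ j ≤ k` and `c[k,m](k+1) = k-m+1`. -/
def cPerm (N k m : ℕ) [NeZero N] : Equiv.Perm (Fin N) :=
  ((List.range m).map fun i => t N (k - i) (k + 1)).prod

/-- The conditions that `aᵢ ≤ k < bᵢ` (with all indices in `{1,…,N}`) and that
`ℓ(w t_{a₁ b₁} ⋯ t_{aᵢ bᵢ}) = ℓ(w) + i` for `1 ≤ i ≤ m`. -/
def StepOK (N k m : ℕ) [NeZero N] (w : Equiv.Perm (Fin N)) (a b : ℕ → ℕ) : Prop :=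
  (∀ i, i < m → 1 ≤ a i ∧ a i ≤ k ∧ k < b i ∧ b i ≤ N) ∧
  (∀ i, i ≤ m → len (w * tProd N a b i) = len w + i)

/-- `w →_{r[k,m]} w'`. -/
def RelR (N k m : ℕ) [NeZero N] (w w' : Equiv.Perm (Fin N)) : Prop :=
  ∃ a b : ℕ → ℕ, StepOK N k m w a b ∧ w' = w * tProd N a b m ∧
    (∀ i j, i < m → j < m → i ≠ j → b i ≠ b j)

/-- `w →_{c[k,m]} w'`. -/
def RelC (N k m : ℕ) [NeZero N] (w w' : Equiv.Perm (Fin N)) : Prop :=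
  ∃ a b : ℕ → ℕ, StepOK N k m w a b ∧ w' = w * tProd N a b m ∧
    (∀ i j, i < m → j < m → i ≠ j → a i ≠ a j)

/-- The divided difference operator `∂ᵢ f = (f - sᵢ·f)/(xᵢ - xᵢ₊₁)` (1-indexed `i`);
the quotient is exact, and is recovered here as the (unique) witness of divisibility. -/
noncomputable def divDiff {N : ℕ} [NeZero N] (i : ℕ) (f : MvPolynomial (Fin N) ℤ) :
    MvPolynomial (Fin N) ℤ :=
  if h : (X (pos N i) - X (pos N (i + 1))) ∣ (f - rename (⇑(t N i (i + 1))) f) then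
    h.choose
  else 0

/-- `∂_{a₁} ∘ ⋯ ∘ ∂_{a_p}` applied to `f`, for a word `l = [a₁,…,a_p]`. -/
noncomputable def divDiffWord {N : ℕ} [NeZero N] (l : List ℕ) (f : MvPolynomial (Fin N) ℤ) :
    MvPolynomial (Fin N) ℤ :=
  l.foldr divDiff f

/-- Auxiliary: produce a reduced word for `w` by repeatedly removing a descent. -/
def redWordAux (N : ℕ) [NeZero N] : ℕ → Equiv.Perm (Fin N) → List ℕ
  | 0, _ => []
  | fuel + 1, w =>
    match ((List.range (N - 1)).map (· + 1)).find? (fun i => decide (val w (i + 1) < val w i)) with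
    | none => []
    | some i => redWordAux N fuel (w * t N i (i + 1)) ++ [i]

/-- A canonical reduced word `(a₁,…,a_p)` for `w`, i.e. `w = s_{a₁} ⋯ s_{a_p}` with `p = ℓ(w)`. -/
def redWord (N : ℕ) [NeZero N] (w : Equiv.Perm (Fin N)) : List ℕ :=
  redWordAux N (N * N) w

/-- The staircase monomial `x₁^{N-1} x₂^{N-2} ⋯ x_{N-1}`. -/
noncomputable def staircase (N : ℕ) : MvPolynomial (Fin N) ℤ :=
  ∏ i : Fin N, X i ^ (N - 1 - (i : ℕ))

/-- The Schubert polynomial `𝔖_w = ∂_{w⁻¹w₀}(x₁^{N-1} ⋯ x_{N-1})`. -/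
noncomputable def schubertPoly (N : ℕ) [NeZero N] (w : Equiv.Perm (Fin N)) :
    MvPolynomial (Fin N) ℤ :=
  divDiffWord (redWord N (w⁻¹ * w0 N)) (staircase N)

/-- The ideal of `Rₙ` generated by the symmetric polynomials with zero constant term. -/
noncomputable def symIdeal (N : ℕ) : Ideal (MvPolynomial (Fin N) ℤ) :=
  Ideal.span {f : MvPolynomial (Fin N) ℤ | f.IsSymmetric ∧ constantCoeff f = 0}

/-- The ring `Hₙ = Rₙ/𝒮`. -/
abbrev HRing (N : ℕ) := MvPolynomial (Fin N) ℤ ⧸ symIdeal N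

/-- The class of the Schubert polynomial `𝔖_w` in `Hₙ`. -/
noncomputable def SS (N : ℕ) [NeZero N] (w : Equiv.Perm (Fin N)) : HRing N :=
  Ideal.Quotient.mk (symIdeal N) (schubertPoly N w)

/-- The complete homogeneous symmetric polynomial of degree `m` in `x₁,…,x_k`. -/
noncomputable def hPoly (N k m : ℕ) : MvPolynomial (Fin N) ℤ :=
  ∑ s ∈ (Finset.univ.filter fun i : Fin N => (i : ℕ) < k).sym m,
    (Multiset.map X (s : Multiset (Fin N))).prod

/-- The elementary symmetric polynomial of degree `m` in `x₁,…,x_k`. -/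
noncomputable def ePoly (N k m : ℕ) : MvPolynomial (Fin N) ℤ :=
  ∑ s ∈ (Finset.univ.filter fun i : Fin N => (i : ℕ) < k).powersetCard m, ∏ i ∈ s, X i

/-- Covering relation of the `k`-Bruhat order. -/
def kCover (N k : ℕ) [NeZero N] (w w' : Equiv.Perm (Fin N)) : Prop :=
  ∃ a b : ℕ, 1 ≤ a ∧ a ≤ k ∧ k < b ∧ b ≤ N ∧ w' = w * t N a b ∧ len w' = len w + 1

/-- The (strict) `k`-Bruhat order `<ₖ`. -/
def kBruhat (N k : ℕ) [NeZero N] : Equiv.Perm (Fin N) → Equiv.Perm (Fin N) → Prop :=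
  Relation.TransGen (kCover N k)

/-- The label `w⁽ⁱ⁺¹⁾(a_{i+1})` (0-indexed `i`) of the `(i+1)`-st step of a path. -/
def label {N : ℕ} [NeZero N] (w : Equiv.Perm (Fin N)) (a b : ℕ → ℕ) (i : ℕ) : ℕ :=
  val (w * tProd N a b (i + 1)) (a i)

/-- `(a,b)` encodes a path of length `m` in the `k`-Bruhat order from `w` to `w'`
(normalized so that `a i = b i = 0` for `i ≥ m`, making the encoding unique). -/
def PathWit (N k m : ℕ) [NeZero N] (w w' : Equiv.Perm (Fin N))
    (ab : (ℕ → ℕ) × (ℕ → ℕ)) : Prop :=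
  StepOK N k m w ab.1 ab.2 ∧ w' = w * tProd N ab.1 ab.2 m ∧
    ∀ i, m ≤ i → ab.1 i = 0 ∧ ab.2 i = 0

/-- Paths of length `m` in the `k`-Bruhat order from `w` to `w'` with strictly
increasing labels. -/
def IncPaths (N k m : ℕ) [NeZero N] (w w' : Equiv.Perm (Fin N)) :
    Set ((ℕ → ℕ) × (ℕ → ℕ)) :=
  {ab | PathWit N k m w w' ab ∧
    ∀ i j, i < j → j < m → label w ab.1 ab.2 i < label w ab.1 ab.2 j}

/-- Paths of length `m` in the `k`-Bruhat order from `w` to `w'` with strictly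
decreasing labels. -/
def DecPaths (N k m : ℕ) [NeZero N] (w w' : Equiv.Perm (Fin N)) :
    Set ((ℕ → ℕ) × (ℕ → ℕ)) :=
  {ab | PathWit N k m w w' ab ∧
    ∀ i j, i < j → j < m → label w ab.1 ab.2 j < label w ab.1 ab.2 i}


/-- The cycle `(x₁ x₂ … x_r)` (sending `x₁ ↦ x₂ ↦ ⋯ ↦ x_r ↦ x₁`), as a product
of transpositions. -/
def cycleList (N : ℕ) [NeZero N] (l : List ℕ) : Equiv.Perm (Fin N) :=
  ((l.zip l.tail).map fun p => t N p.1 p.2).prod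

/-- The Grassmannian permutation `h[k;p,q]` of descent `k` and hook shape `(p,1^{q-1})`:
the `(p+q)`-cycle `(k-q+1  k-q+2 … k  k+p  k+p-1 … k+1)`. -/
def hookPerm (N k p q : ℕ) [NeZero N] : Equiv.Perm (Fin N) :=
  cycleList N (((List.range q).map fun i => k - q + 1 + i) ++
    ((List.range p).reverse.map fun i => k + 1 + i))

/-- `w|ₚ ∈ S_{N-1}`: delete row `p` and column `w(p)` from the permutation matrix of `w`. -/
def drop {N : ℕ} (w : Equiv.Perm (Fin (N + 1))) (p : Fin (N + 1)) : Equiv.Perm (Fin N) :=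
  Equiv.removeNone (((finSuccEquiv' p).symm.trans (w : Fin (N + 1) ≃ Fin (N + 1))).trans
    (finSuccEquiv' (w p)))

/-- `lam` is a partition with at most `k` parts (1-indexed parts `lam 1 ≥ lam 2 ≥ ⋯`,
normalized by `lam 0 = 0`). -/
def IsPartFun (k : ℕ) (lam : ℕ → ℕ) : Prop :=
  lam 0 = 0 ∧ (∀ j, 1 ≤ j → lam (j + 1) ≤ lam j) ∧ ∀ j, k < j → lam j = 0

/-- `h_d(x₁,…,x_k)` for an integer `d`, with `h_d = 0` for `d < 0`. -/
noncomputable def hPolyZ (N k : ℕ) (d : ℤ) : MvPolynomial (Fin N) ℤ :=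
  if 0 ≤ d then hPoly N k d.toNat else 0

/-- The Schur polynomial `s_λ(x₁,…,x_k)`, via the Jacobi–Trudi determinant
`det(h_{λᵢ+j-i})_{1 ≤ i,j ≤ k}`. -/
noncomputable def schurPoly (N k : ℕ) (lam : ℕ → ℕ) : MvPolynomial (Fin N) ℤ :=
  (Matrix.of fun i j : Fin k =>
    hPolyZ N k ((lam ((i : ℕ) + 1) : ℤ) + (j : ℕ) - (i : ℕ))).det

/-- `r_j = #{i : aᵢ = j}` (with `i` ranging over `0,…,m-1`, 0-indexed). -/
def rJ (a : ℕ → ℕ) (m j : ℕ) : ℕ := ((Finset.range m).filter fun i => a i = j).card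

/-- `μ_j = r_{j+1} + ⋯ + r_k`. -/
def muJ (a : ℕ → ℕ) (m k j : ℕ) : ℕ :=
  if j = 0 then 0 else ∑ j' ∈ Finset.Icc (j + 1) k, rJ a m j'

/-- `λ_j = μ_j + r_j`. -/
def lamJ (a : ℕ → ℕ) (m k j : ℕ) : ℕ :=
  if j = 0 then 0 else muJ a m k j + rJ a m j

/-- `d_j = #{i : bᵢ = N+1-j}` (with `i` ranging over `0,…,m-1`, 0-indexed). -/
def dJ (b : ℕ → ℕ) (m N j : ℕ) : ℕ :=
  ((Finset.range m).filter fun i => b i = N + 1 - j).card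

/-- `μ′_j = d_{j+1} + ⋯ + d_{N-k}`. -/
def muJ' (b : ℕ → ℕ) (m N k j : ℕ) : ℕ :=
  if j = 0 then 0 else ∑ j' ∈ Finset.Icc (j + 1) (N - k), dJ b m N j'

/-- `λ′_j = μ′_j + d_j`. -/
def lamJ' (b : ℕ → ℕ) (m N k j : ℕ) : ℕ :=
  if j = 0 then 0 else muJ' b m N k j + dJ b m N j

/-- The conjugate (transpose) partition: `νᵗ_j = #{i : νᵢ ≥ j}`, for `ν` with at
most `k` parts. -/
def conjPart (k : ℕ) (nu : ℕ → ℕ) (j : ℕ) : ℕ :=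
  if j = 0 then 0 else ((Finset.Icc 1 k).filter fun i => j ≤ nu i).card

/-- `wv` is the Grassmannian permutation of descent `k` and shape `nu`:
`wv(j) = j + ν_{k+1-j}` for `1 ≤ j ≤ k`, and `wv` is increasing on `{k+1,…,N}`. -/
def IsGrassOf (N k : ℕ) [NeZero N] (nu : ℕ → ℕ) (wv : Equiv.Perm (Fin N)) : Prop :=
  (∀ j, 1 ≤ j → j ≤ k → val wv j = j + nu (k + 1 - j)) ∧
  (∀ j, k < j → j < N → val wv j < val wv (j + 1))

/-- Paths of length `m` in the `k`-Bruhat order from `w` to `w'` whose labels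
increase strictly for the first `p` steps and decrease strictly thereafter
(positions `p, p+1, …, m` being decreasing, 1-indexed). -/
def IncDecPaths (N k m p : ℕ) [NeZero N] (w w' : Equiv.Perm (Fin N)) :
    Set ((ℕ → ℕ) × (ℕ → ℕ)) :=
  {ab | PathWit N k m w w' ab ∧
    (∀ i j, i < j → j < p → label w ab.1 ab.2 i < label w ab.1 ab.2 j) ∧
    (∀ i j, p - 1 ≤ i → i < j → j < m → label w ab.1 ab.2 j < label w ab.1 ab.2 i)}

/-- Paths of length `m` in the `k`-Bruhat order from `w` to `w'` whose labels
decrease strictly for the first `q` steps and increase strictly thereafter. -/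
def DecIncPaths (N k m q : ℕ) [NeZero N] (w w' : Equiv.Perm (Fin N)) :
    Set ((ℕ → ℕ) × (ℕ → ℕ)) :=
  {ab | PathWit N k m w w' ab ∧
    (∀ i j, i < j → j < q → label w ab.1 ab.2 j < label w ab.1 ab.2 i) ∧
    (∀ i j, q - 1 ≤ i → i < j → j < m → label w ab.1 ab.2 i < label w ab.1 ab.2 j)}


/-! ### Covers -/

/-- combinatorial description of the covering relation `w ⋖ w t_{a,b}`. -/
def Cov {N : ℕ} (w : Equiv.Perm (Fin N)) (a b : Fin N) : Prop :=
  a < b ∧ w a < w b ∧ ∀ c, a < c → c < b → w c < w a ∨ w b < w c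

lemma len_mul_swap {N : ℕ} (w : Equiv.Perm (Fin N)) (a b : Fin N) :
    len (w * swap a b) = (Finset.univ.filter fun p : Fin N × Fin N =>
      swap a b p.1 < swap a b p.2 ∧ w p.2 < w p.1).card := by
  unfold len
  refine Finset.card_equiv ((swap a b).prodCongr (swap a b)) ?_
  intro p
  rw [Finset.mem_filter, Finset.mem_filter]
  simp

lemma len_swap_aux {N : ℕ} (w : Equiv.Perm (Fin N)) (a b : Fin N) (hab : a < b)
    (hw : w a < w b) :
    ∃ R : Finset (Fin N × Fin N), len (w * swap a b) = len w + R.card ∧ (b, a) ∈ R ∧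
      ((∀ c, a < c → c < b → w c < w a ∨ w b < w c) → R = {(b, a)}) ∧
      (∀ c, a < c → c < b → w a < w c → w c < w b → (b, c) ∈ R) := by
  rw [len_mul_swap]
  unfold len
  set τ := swap a b with hτ
  have hτa : τ a = b := swap_apply_left a b
  have hτb : τ b = a := swap_apply_right a b
  have hτc : ∀ c, c ≠ a → c ≠ b → τ c = c := fun c h1 h2 => swap_apply_of_ne_of_ne h1 h2
  have hinj : ∀ x y, w x = w y → x = y := fun x y h => w.injective h
  set A := Finset.univ.filter fun p : Fin N × Fin N => p.1 < p.2 ∧ w p.2 < w p.1 with hA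
  set B := Finset.univ.filter fun p : Fin N × Fin N => τ p.1 < τ p.2 ∧ w p.2 < w p.1 with hB
  have mA : ∀ x y, (x, y) ∈ A ↔ x < y ∧ w y < w x := by intro x y; simp [hA]
  have mB : ∀ x y, (x, y) ∈ B ↔ τ x < τ y ∧ w y < w x := by intro x y; simp [hB]
  clear_value A B τ
  let ψ : Fin N × Fin N → Fin N × Fin N := fun p => if τ p.1 < τ p.2 then p else (τ p.1, τ p.2)
  have key : ∀ x y, (x, y) ∈ A → ¬ τ x < τ y →
      (x = a ∧ a < y ∧ y < b ∧ w y < w a) ∨ (y = b ∧ a < x ∧ x < b ∧ w b < w x) := by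
    intro x y h h2
    rw [mA] at h
    by_cases h3 : x = a <;> by_cases h4 : y = b <;> by_cases h5 : x = b <;>
      by_cases h6 : y = a <;> grind
  have hmem : ∀ p ∈ A, ψ p ∈ B := by
    rintro ⟨x, y⟩ h
    by_cases h2 : τ x < τ y
    · simp only [ψ, h2, if_true]
      rw [mB]; exact ⟨h2, ((mA _ _).1 h).2⟩
    · simp only [ψ, h2, if_false]
      rw [mB]
      rcases key x y h h2 with h3 | h3
      · have := hτc y
        grind
      · have := hτc x
        grind
  have hψinj : Set.InjOn ψ A := by
    rintro ⟨x, y⟩ h ⟨x', y'⟩ h' heq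
    have h0 := h; have h0' := h'
    simp only [Finset.mem_coe] at h h'
    rw [mA] at h h'
    by_cases h2 : τ x < τ y <;> by_cases h2' : τ x' < τ y' <;>
      simp only [ψ, h2, h2', if_true, if_false, Prod.mk.injEq] at heq
    · grind
    · exfalso
      rcases key x' y' h0' h2' with h3 | h3
      · have := hτc y'
        grind
      · have := hτc x'
        grind
    · exfalso
      rcases key x y h0 h2 with h3 | h3
      · have := hτc y
        grind
      · have := hτc x
        grind
    · have := τ.injective heq.1
      have := τ.injective heq.2
      grind
  refine ⟨B \ A.image ψ, ?_, ?_, ?_, ?_⟩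
  · have h1 : A.image ψ ⊆ B := by
      intro p hp
      obtain ⟨q, hq, rfl⟩ := Finset.mem_image.1 hp
      exact hmem q hq
    have h2 := Finset.card_sdiff_add_card_eq_card h1
    have h3 : (A.image ψ).card = A.card := Finset.card_image_of_injOn hψinj
    omega
  · rw [Finset.mem_sdiff]
    refine ⟨by rw [mB]; grind, ?_⟩
    intro h
    obtain ⟨⟨x, y⟩, hq, h4⟩ := Finset.mem_image.1 h
    by_cases h2 : τ x < τ y
    · simp only [ψ, h2, if_true] at h4
      rw [mA] at hq
      grind
    · simp only [ψ, h2, if_false, Prod.mk.injEq] at h4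
      have hk := key x y hq h2
      have h5 := hτc x
      have h6 := hτc y
      grind
  · intro hc
    ext ⟨x, y⟩
    simp only [Finset.mem_singleton, Finset.mem_sdiff, Prod.mk.injEq]
    constructor
    · rintro ⟨h1, h2⟩
      by_contra h3
      apply h2
      rw [mB] at h1
      by_cases hxy : x < y
      · exact Finset.mem_image.2 ⟨(x, y), by rw [mA]; grind, by simp [ψ, h1.1]⟩
      · have hne : y < x := by grind
        by_cases hx : x = b
        · have hy : y ≠ a := by grind
          have hy2 := hτc y hy (by grind)
          have hcy := hc y (by grind) (by grind)
          refine Finset.mem_image.2 ⟨(a, y), by rw [mA]; grind, ?_⟩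
          have : ¬ (τ a < τ y) := by grind
          simp only [ψ, this, if_false]
          grind
        · by_cases hy : y = a
          · have hx2 := hτc x (by grind) hx
            have hcy := hc x (by grind) (by grind)
            refine Finset.mem_image.2 ⟨(x, b), by rw [mA]; grind, ?_⟩
            have : ¬ (τ x < τ b) := by grind
            simp only [ψ, this, if_false]
            grind
          · exfalso
            by_cases hxa : x = a <;> by_cases hyb : y = b <;> grind
    · rintro ⟨rfl, rfl⟩
      refine ⟨by rw [mB]; grind, ?_⟩
      intro h
      obtain ⟨⟨x', y'⟩, hq, h4⟩ := Finset.mem_image.1 h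
      by_cases h2 : τ x' < τ y'
      · simp only [ψ, h2, if_true] at h4
        rw [mA] at hq
        grind
      · simp only [ψ, h2, if_false, Prod.mk.injEq] at h4
        have hk := key x' y' hq h2
        have h5 := hτc x'
        have h6 := hτc y'
        grind
  · intro c hac hcb h1 h2
    rw [Finset.mem_sdiff]
    have h7 := hτc c
    refine ⟨by rw [mB]; grind, ?_⟩
    intro h
    obtain ⟨⟨x, y⟩, hq, h4⟩ := Finset.mem_image.1 h
    by_cases h2 : τ x < τ y
    · simp only [ψ, h2, if_true] at h4
      rw [mA] at hq
      grind
    · simp only [ψ, h2, if_false, Prod.mk.injEq] at h4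
      have hk := key x y hq h2
      have h5 := hτc x
      have h6 := hτc y
      grind

lemma len_swap_lt {N : ℕ} (w : Equiv.Perm (Fin N)) (a b : Fin N) (hab : a < b)
    (hw : w a < w b) : len w < len (w * swap a b) := by
  obtain ⟨R, h1, h2, -⟩ := len_swap_aux w a b hab hw
  have := Finset.card_pos.2 ⟨_, h2⟩
  omega

lemma cov_iff {N : ℕ} (w : Equiv.Perm (Fin N)) (a b : Fin N) (hab : a < b) :
    len (w * swap a b) = len w + 1 ↔ Cov w a b := by
  by_cases hw : w a < w b
  · obtain ⟨R, h1, h2, h3, h4⟩ := len_swap_aux w a b hab hw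
    constructor
    · intro h
      refine ⟨hab, hw, ?_⟩
      intro c hac hcb
      by_contra hcon
      push Not at hcon
      have h5 := h4 c hac hcb (lt_of_le_of_ne hcon.1 (fun h => hac.ne (w.injective h)))
        (lt_of_le_of_ne hcon.2 (fun h => hcb.ne (w.injective h)))
      have h6 : ({(b, a), (b, c)} : Finset (Fin N × Fin N)) ⊆ R := by
        intro p hp
        simp only [Finset.mem_insert, Finset.mem_singleton] at hp
        rcases hp with rfl | rfl <;> assumption
      have h7 := Finset.card_le_card h6
      rw [Finset.card_pair (by simp [hac.ne])] at h7
      omega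
    · rintro ⟨-, -, h⟩
      rw [h1, h3 h]
      simp
  · have hw' : w b < w a := lt_of_le_of_ne (not_lt.1 hw) (fun h => hab.ne' (w.injective h))
    have := len_swap_lt (w * swap a b) a b hab (by simpa using hw')
    rw [mul_assoc, swap_mul_self, mul_one] at this
    constructor
    · intro h; omega
    · rintro ⟨-, h, -⟩
      exact absurd h hw

/-! ### The Bruhat operators and their quadratic relations -/

/-- functions on the symmetric group -/
abbrev Fun (N : ℕ) := Equiv.Perm (Fin N) → ℤ

/-- the Bruhat operator -/
noncomputable def T {N : ℕ} (a b : Fin N) : Module.End ℤ (Fun N) where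
  toFun f := fun w => if Cov w a b then f (w * swap a b) else 0
  map_add' f g := by
    funext w
    by_cases h : Cov w a b <;> simp [h]
  map_smul' r f := by
    funext w
    by_cases h : Cov w a b <;> simp [h]

lemma T_apply {N : ℕ} (a b : Fin N) (f : Fun N) (w : Equiv.Perm (Fin N)) :
    T a b f w = if Cov w a b then f (w * swap a b) else 0 := rfl

lemma TT_apply {N : ℕ} (a b c d : Fin N) (f : Fun N) (w : Equiv.Perm (Fin N)) :
    (T a b * T c d) f w =
      if Cov w a b ∧ Cov (w * swap a b) c d then f (w * swap a b * swap c d) else 0 := by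
  rw [Module.End.mul_apply, T_apply, T_apply]
  by_cases h : Cov w a b <;> simp [h]

lemma T_eq_zero {N : ℕ} (a b : Fin N) (h : ¬ a < b) : T a b = 0 := by
  ext f w
  have : ¬ Cov w a b := fun hc => h hc.1
  simp [T_apply, this]

lemma TT_comm_cov {N : ℕ} (a b c d : Fin N) (hac : a ≠ c) (had : a ≠ d) (hbc : b ≠ c)
    (hbd : b ≠ d) (w : Equiv.Perm (Fin N)) (h1 : Cov w a b) (h2 : Cov (w * swap a b) c d) :
    Cov w c d ∧ Cov (w * swap c d) a b := by
  have hinj : ∀ x y, w x = w y → x = y := fun x y h => w.injective h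
  have e : ∀ x, (w * swap a b) x = if x = a then w b else if x = b then w a else w x := by
    intro x
    simp only [Equiv.Perm.mul_apply, swap_apply_def]
    split_ifs <;> rfl
  have e' : ∀ x, (w * swap c d) x = if x = c then w d else if x = d then w c else w x := by
    intro x
    simp only [Equiv.Perm.mul_apply, swap_apply_def]
    split_ifs <;> rfl
  obtain ⟨hab, hw, hv⟩ := h1
  obtain ⟨hcd, hw2, hv2⟩ := h2
  simp only [e] at hw2 hv2
  simp only [Cov, e']
  rw [if_neg hac.symm, if_neg hbc.symm, if_neg had.symm, if_neg hbd.symm] at hw2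
  simp only [if_neg hac.symm, if_neg hbc.symm, if_neg had.symm, if_neg hbd.symm] at hv2
  simp only [if_neg hac, if_neg hbc, if_neg had, if_neg hbd]
  have ha := hv2 a
  have hb := hv2 b
  have hc := hv c
  have hd := hv d
  refine ⟨⟨hcd, hw2, ?_⟩, hab, hw, ?_⟩
  · intro x hx1 hx2
    have := hv2 x hx1 hx2
    grind
  · intro x hx1 hx2
    have := hv x hx1 hx2
    grind

lemma TT_comm {N : ℕ} (a b c d : Fin N) (hac : a ≠ c) (had : a ≠ d) (hbc : b ≠ c)
    (hbd : b ≠ d) : T a b * T c d = T c d * T a b := by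
  apply LinearMap.ext; intro f; funext w
  rw [TT_apply, TT_apply]
  have h1 : (Cov w a b ∧ Cov (w * swap a b) c d) ↔ (Cov w c d ∧ Cov (w * swap c d) a b) :=
    ⟨fun h => TT_comm_cov a b c d hac had hbc hbd w h.1 h.2,
     fun h => TT_comm_cov c d a b hac.symm hbc.symm had.symm hbd.symm w h.1 h.2⟩
  have h2 : w * swap a b * swap c d = w * swap c d * swap a b := by
    rw [mul_assoc, mul_assoc]
    congr 1
    ext x
    simp only [Equiv.Perm.mul_apply, swap_apply_def]
    grind
  simp only [h1, h2]

lemma fk1 {N : ℕ} (a b c : Fin N) (hab : a < b) (hbc : b < c) :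
    T a b * T b c = T b c * T a c + T a c * T a b := by
  apply LinearMap.ext; intro f; funext w
  rw [LinearMap.add_apply, Pi.add_apply, TT_apply, TT_apply, TT_apply]
  have hinj : ∀ x y, w x = w y → x = y := fun x y h => w.injective h
  have h2 : w * swap b c * swap a c = w * swap a b * swap b c := by
    rw [mul_assoc, mul_assoc]
    congr 1
    ext x
    simp only [Equiv.Perm.mul_apply, swap_apply_def]
    grind
  have h3 : w * swap a c * swap a b = w * swap a b * swap b c := by
    rw [mul_assoc, mul_assoc]
    congr 1
    ext x
    simp only [Equiv.Perm.mul_apply, swap_apply_def]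
    grind
  rw [h2, h3]
  have e : ∀ u v x, (w * swap u v) x = if x = u then w v else if x = v then w u else w x := by
    intro u v x
    simp only [Equiv.Perm.mul_apply, swap_apply_def]
    split_ifs <;> rfl
  have hac := hab.trans hbc
  have hxy : w a ≠ w b := fun h => hab.ne (hinj _ _ h)
  have hyz : w b ≠ w c := fun h => hbc.ne (hinj _ _ h)
  have hxz : w a ≠ w c := fun h => hac.ne (hinj _ _ h)
  rcases lt_or_gt_of_ne hyz with h | h
  · have n3 : ¬ (Cov w a c ∧ Cov (w * swap a c) a b) := by
      rintro ⟨-, -, h4, -⟩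
      simp only [e] at h4
      grind
    have i : (Cov w a b ∧ Cov (w * swap a b) b c) ↔ (Cov w b c ∧ Cov (w * swap b c) a c) := by
      constructor
      · rintro ⟨⟨-, p1, p2⟩, -, p3, p4⟩
        simp only [e] at p3 p4
        refine ⟨⟨hbc, h, fun x hx1 hx2 => ?_⟩, hac, ?_, fun x hx1 hx2 => ?_⟩
        · have := p4 x hx1 hx2
          grind
        · simp only [e]; grind
        · have q1 := p4 x
          have q2 := p2 x
          simp only [e]
          grind
      · rintro ⟨⟨-, p1, p2⟩, -, p3, p4⟩
        simp only [e] at p3 p4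
        refine ⟨⟨hab, by grind, fun x hx1 hx2 => ?_⟩, hbc, ?_, fun x hx1 hx2 => ?_⟩
        · have := p4 x hx1 (hx2.trans hbc)
          grind
        · simp only [e]; grind
        · have q1 := p4 x
          have q2 := p2 x
          have := hinj x b
          simp only [e]
          grind
    simp only [i, n3, if_false, add_zero]
  · have n3 : ¬ (Cov w b c ∧ Cov (w * swap b c) a c) := by
      rintro ⟨⟨-, h4, -⟩, -⟩
      grind
    have i : (Cov w a b ∧ Cov (w * swap a b) b c) ↔ (Cov w a c ∧ Cov (w * swap a c) a b) := by
      constructor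
      · rintro ⟨⟨-, p1, p2⟩, -, p3, p4⟩
        simp only [e] at p3 p4
        refine ⟨⟨hac, by grind, fun x hx1 hx2 => ?_⟩, hab, ?_, fun x hx1 hx2 => ?_⟩
        · have q1 := p4 x
          have q2 := p2 x
          grind
        · simp only [e]; grind
        · have q2 := p2 x
          simp only [e]
          grind
      · rintro ⟨⟨-, p1, p2⟩, -, p3, p4⟩
        simp only [e] at p3 p4
        refine ⟨⟨hab, by grind, fun x hx1 hx2 => ?_⟩, hbc, ?_, fun x hx1 hx2 => ?_⟩
        · have q1 := p4 x
          have q2 := p2 x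
          have := hinj x c
          grind
        · simp only [e]; grind
        · have q2 := p2 x
          simp only [e]
          grind
    simp only [i, n3, if_false, zero_add]

lemma fk2 {N : ℕ} (a b c : Fin N) (hab : a < b) (hbc : b < c) :
    T b c * T a b = T a c * T b c + T a b * T a c := by
  apply LinearMap.ext; intro f; funext w
  rw [LinearMap.add_apply, Pi.add_apply, TT_apply, TT_apply, TT_apply]
  have hinj : ∀ x y, w x = w y → x = y := fun x y h => w.injective h
  have h2 : w * swap a c * swap b c = w * swap b c * swap a b := by
    rw [mul_assoc, mul_assoc]
    congr 1
    ext x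
    simp only [Equiv.Perm.mul_apply, swap_apply_def]
    grind
  have h3 : w * swap a b * swap a c = w * swap b c * swap a b := by
    rw [mul_assoc, mul_assoc]
    congr 1
    ext x
    simp only [Equiv.Perm.mul_apply, swap_apply_def]
    grind
  rw [h2, h3]
  have e : ∀ u v x, (w * swap u v) x = if x = u then w v else if x = v then w u else w x := by
    intro u v x
    simp only [Equiv.Perm.mul_apply, swap_apply_def]
    split_ifs <;> rfl
  have hac := hab.trans hbc
  have hxy : w a ≠ w b := fun h => hab.ne (hinj _ _ h)
  have hyz : w b ≠ w c := fun h => hbc.ne (hinj _ _ h)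
  have hxz : w a ≠ w c := fun h => hac.ne (hinj _ _ h)
  rcases lt_or_gt_of_ne hxy with h | h
  · have n3 : ¬ (Cov w a c ∧ Cov (w * swap a c) b c) := by
      rintro ⟨-, -, h4, -⟩
      simp only [e] at h4
      grind
    have i : (Cov w b c ∧ Cov (w * swap b c) a b) ↔ (Cov w a b ∧ Cov (w * swap a b) a c) := by
      constructor
      · rintro ⟨⟨-, p1, p2⟩, -, p3, p4⟩
        simp only [e] at p3 p4
        refine ⟨⟨hab, h, fun x hx1 hx2 => ?_⟩, hac, ?_, fun x hx1 hx2 => ?_⟩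
        · have := p4 x hx1 hx2
          grind
        · simp only [e]; grind
        · have q1 := p4 x
          have q2 := p2 x
          simp only [e]
          grind
      · rintro ⟨⟨-, p1, p2⟩, -, p3, p4⟩
        simp only [e] at p3 p4
        refine ⟨⟨hbc, by grind, fun x hx1 hx2 => ?_⟩, hab, ?_, fun x hx1 hx2 => ?_⟩
        · have := p4 x (hab.trans hx1) hx2
          grind
        · simp only [e]; grind
        · have q1 := p4 x
          have q2 := p2 x
          have := hinj x b
          simp only [e]
          grind
    simp only [i, n3, if_false, zero_add]
  · have n3 : ¬ (Cov w a b ∧ Cov (w * swap a b) a c) := by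
      rintro ⟨⟨-, h4, -⟩, -⟩
      grind
    have i : (Cov w b c ∧ Cov (w * swap b c) a b) ↔ (Cov w a c ∧ Cov (w * swap a c) b c) := by
      constructor
      · rintro ⟨⟨-, p1, p2⟩, -, p3, p4⟩
        simp only [e] at p3 p4
        refine ⟨⟨hac, by grind, fun x hx1 hx2 => ?_⟩, hbc, ?_, fun x hx1 hx2 => ?_⟩
        · have q1 := p4 x
          have q2 := p2 x
          grind
        · simp only [e]; grind
        · have q2 := p2 x
          simp only [e]
          grind
      · rintro ⟨⟨-, p1, p2⟩, -, p3, p4⟩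
        simp only [e] at p3 p4
        refine ⟨⟨hbc, by grind, fun x hx1 hx2 => ?_⟩, hab, ?_, fun x hx1 hx2 => ?_⟩
        · have q1 := p4 x
          have q2 := p2 x
          have := hinj x a
          grind
        · simp only [e]; grind
        · have q2 := p2 x
          simp only [e]
          grind
    simp only [i, n3, if_false, add_zero]

/-- signed generators `[ij]` -/
noncomputable def br {N : ℕ} (i j : Fin N) : Module.End ℤ (Fun N) := T i j - T j i

lemma br_neg {N : ℕ} (i j : Fin N) : br j i = - br i j := by simp [br]

lemma br_self {N : ℕ} (i : Fin N) : br i i = 0 := by simp [br]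

lemma br_lt {N : ℕ} {i j : Fin N} (h : i < j) : br i j = T i j := by
  simp [br, T_eq_zero j i (not_lt.2 h.le)]

lemma br_comm {N : ℕ} (a b c d : Fin N) (hac : a ≠ c) (had : a ≠ d) (hbc : b ≠ c)
    (hbd : b ≠ d) : br a b * br c d = br c d * br a b := by
  have h1 := TT_comm a b c d hac had hbc hbd
  have h2 := TT_comm a b d c had hac hbd hbc
  have h3 := TT_comm b a c d hbc hbd hac had
  have h4 := TT_comm b a d c hbd hbc had hac
  simp only [br, sub_mul, mul_sub, h1, h2, h3, h4]
  abel

lemma br_fk {N : ℕ} (i j l : Fin N) (hij : i ≠ j) (hjl : j ≠ l) (hil : i ≠ l) :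
    br i j * br j l + br j l * br l i + br l i * br i j = 0 := by
  have main1 : ∀ a b c : Fin N, a < b → b < c →
      br a b * br b c + br b c * br c a + br c a * br a b = 0 := by
    intro a b c h1 h2
    rw [br_neg a c, br_lt h1, br_lt h2, br_lt (h1.trans h2), fk1 a b c h1 h2]
    noncomm_ring
  have main2 : ∀ a b c : Fin N, a < b → b < c →
      br c b * br b a + br b a * br a c + br a c * br c b = 0 := by
    intro a b c h1 h2
    rw [br_neg b c, br_neg a b, br_lt h1, br_lt h2, br_lt (h1.trans h2), neg_mul_neg,
      fk2 a b c h1 h2]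
    noncomm_ring
  rcases lt_or_gt_of_ne hij with h1 | h1 <;> rcases lt_or_gt_of_ne hjl with h2 | h2 <;>
    rcases lt_or_gt_of_ne hil with h3 | h3
  · exact main1 i j l h1 h2
  · exact absurd (h1.trans h2) (not_lt.2 h3.le)
  · have := main2 i l j h3 h2
    rw [← this]; abel
  · have := main1 l i j h3 h1
    rw [← this]; abel
  · have := main2 j i l h1 h3
    rw [← this]; abel
  · have := main1 j l i h2 h3
    rw [← this]; abel
  · exact absurd (h2.trans h1) (not_lt.2 h3.le)
  · exact main2 l j i h2 h1

/-- the Monk (Dunkl) operators -/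
noncomputable def Xop {N : ℕ} (i : Fin N) : Module.End ℤ (Fun N) := ∑ l, br i l

lemma Xop_comm {N : ℕ} (i j : Fin N) : Xop i * Xop j = Xop j * Xop i := by
  by_cases hij : i = j
  · rw [hij]
  set c : Fin N → Fin N → Module.End ℤ (Fun N) :=
    fun l m => br i l * br j m - br j m * br i l with hc
  have cjj : c j j = 0 := by simp [hc, br_self]
  have cii : c i i = 0 := by simp [hc, br_self]
  have cji : c j i = 0 := by simp [hc, br_neg i j]
  have h1 : ∀ l m, c l m = (if l = m then c m m else 0) + (if l = j then c j m else 0) +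
      (if m = i then c l i else 0) := by
    intro l m
    by_cases e1 : l = m
    · subst e1
      by_cases e2 : l = j
      · subst e2
        have : l ≠ i := fun h => hij h.symm
        simp [this, cjj]
      · by_cases e3 : l = i
        · subst e3
          simp [e2, cii]
        · simp [e2, e3]
    · by_cases e2 : l = j
      · subst e2
        by_cases e3 : m = i
        · subst e3
          simp [e1, cji]
        · simp [e1, e3]
      · by_cases e3 : m = i
        · subst e3
          simp [e1, e2]
        · simp only [e1, e2, e3, if_false, add_zero]
          exact sub_eq_zero.2 (br_comm i l j m hij (Ne.symm e3) e2 e1)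
  have h2 : Xop i * Xop j - Xop j * Xop i = ∑ l, ∑ m, c l m := by
    unfold Xop
    rw [Finset.sum_mul_sum, Finset.sum_mul_sum, Finset.sum_comm (γ := Fin N) (f := fun a b => br j a * br i b),
      ← Finset.sum_sub_distrib]
    refine Finset.sum_congr rfl fun l _ => ?_
    rw [← Finset.sum_sub_distrib]
  have h3 : ∑ l, ∑ m, c l m = ∑ m, (c m m + c j m + c m i) := by
    simp_rw [Finset.sum_congr rfl fun l _ => Finset.sum_congr rfl fun m _ => h1 l m]
    simp only [Finset.sum_add_distrib]
    congr 1
    · congr 1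
      · simp
      · rw [Finset.sum_comm]; simp
    · simp
  rw [← sub_eq_zero, h2, h3]
  refine Finset.sum_eq_zero fun m _ => ?_
  by_cases e1 : m = i
  · subst e1; simp [cii, cji]
  by_cases e2 : m = j
  · subst e2; simp [cjj, cji]
  have k1 := br_fk i j m hij (Ne.symm e2) (Ne.symm e1)
  have k2 := br_fk j i m (Ne.symm hij) (Ne.symm e1) (Ne.symm e2)
  rw [br_neg i j, br_neg m i, br_neg j m] at k2
  rw [br_neg i m] at k1 k2
  simp only [hc]
  rw [br_neg i j]
  have k3 : br i j * br j m + br j m * -br i m + -br i m * br i j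
    - (-br i j * - -br i m + - -br i m * -br j m + -br j m * -br i j) = 0 := by rw [k1, k2, sub_zero]
  rw [← k3]
  noncomm_ring

/-! ### Label operators and the intertwining relation -/

/-- the sum of all cover steps with label `v` (0-indexed) of the `k`-Bruhat order -/
noncomputable def uop {N : ℕ} (k v : ℕ) : Module.End ℤ (Fun N) where
  toFun f := fun w => ∑ a : Fin N, ∑ b : Fin N,
    if (a : ℕ) < k ∧ k ≤ (b : ℕ) ∧ (w b : ℕ) = v then T a b f w else 0
  map_add' f g := by
    funext w
    simp only [map_add, Pi.add_apply, ← Finset.sum_add_distrib]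
    refine Finset.sum_congr rfl fun a _ => Finset.sum_congr rfl fun b _ => ?_
    split_ifs <;> simp
  map_smul' r f := by
    funext w
    simp only [map_smul, Pi.smul_apply, RingHom.id_apply, Finset.smul_sum]
    refine Finset.sum_congr rfl fun a _ => Finset.sum_congr rfl fun b _ => ?_
    split_ifs <;> simp

lemma uop_apply {N : ℕ} (k v : ℕ) (f : Fun N) (w : Equiv.Perm (Fin N)) :
    uop k v f w = ∑ a : Fin N, ∑ b : Fin N,
      if (a : ℕ) < k ∧ k ≤ (b : ℕ) ∧ (w b : ℕ) = v then T a b f w else 0 := rfl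

lemma uop_eval {N : ℕ} (k v : ℕ) (f : Fun N) (w : Equiv.Perm (Fin N)) (b : Fin N)
    (hb : (w b : ℕ) = v) :
    uop k v f w = if k ≤ (b : ℕ) then ∑ a : Fin N, if (a : ℕ) < k then T a b f w else 0
      else 0 := by
  rw [uop_apply]
  have : ∀ a : Fin N, (∑ b' : Fin N,
      if (a : ℕ) < k ∧ k ≤ (b' : ℕ) ∧ (w b' : ℕ) = v then T a b' f w else 0) =
      if (a : ℕ) < k ∧ k ≤ (b : ℕ) then T a b f w else 0 := by
    intro a
    rw [Finset.sum_eq_single b]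
    · simp [hb]
    · intro b' _ hne
      have : (w b' : ℕ) ≠ v := by
        intro h
        exact hne (w.injective (Fin.ext (h.trans hb.symm)))
      simp [this]
    · simp
  simp only [this]
  by_cases h : k ≤ (b : ℕ) <;> simp [h]

lemma T_uop {N : ℕ} (k v : ℕ) (f : Fun N) (w : Equiv.Perm (Fin N)) (b c d : Fin N)
    (hb : (w b : ℕ) = v) :
    T c d (uop k v f) w = if k ≤ (swap c d b : ℕ) then
      ∑ a : Fin N, (if (a : ℕ) < k then (T c d * T a (swap c d b)) f w else 0) else 0 := by
  have h := uop_eval k v f (w * swap c d) (swap c d b) (by simpa using hb)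
  rw [T_apply, h]
  simp only [Module.End.mul_apply, T_apply c d]
  by_cases hc : Cov w c d <;> simp [hc]

/-- truncated Monk operator: only steps with label `< m` -/
noncomputable def Xt {N : ℕ} (κ : Fin N) (m : ℕ) : Module.End ℤ (Fun N) where
  toFun f := fun w => ∑ j : Fin N, ((if (w j : ℕ) < m then T κ j f w else 0) -
    (if (w κ : ℕ) < m then T j κ f w else 0))
  map_add' f g := by
    funext w
    simp only [map_add, Pi.add_apply, ← Finset.sum_add_distrib]
    refine Finset.sum_congr rfl fun a _ => ?_
    split_ifs <;> (try simp) <;> (try ring)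
  map_smul' r f := by
    funext w
    simp only [map_smul, Pi.smul_apply, RingHom.id_apply, Finset.smul_sum]
    refine Finset.sum_congr rfl fun a _ => ?_
    split_ifs <;> (try simp) <;> (try ring)

lemma Xt_apply {N : ℕ} (κ : Fin N) (m : ℕ) (f : Fun N) (w : Equiv.Perm (Fin N)) :
    Xt κ m f w = ∑ j : Fin N, ((if (w j : ℕ) < m then T κ j f w else 0) -
    (if (w κ : ℕ) < m then T j κ f w else 0)) := rfl

lemma Xt_zero {N : ℕ} (κ : Fin N) : Xt κ 0 = 0 := by
  apply LinearMap.ext; intro f; funext w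
  simp [Xt_apply]

lemma Xt_full {N : ℕ} (κ : Fin N) : Xt κ N = Xop κ := by
  apply LinearMap.ext; intro f; funext w
  simp [Xt_apply, Xop, br]

lemma T_Xt {N : ℕ} (κ : Fin N) (m : ℕ) (f : Fun N) (w : Equiv.Perm (Fin N)) (c d : Fin N) :
    T c d (Xt κ m f) w = ∑ j : Fin N, ((if (w (swap c d j) : ℕ) < m then (T c d * T κ j) f w else 0) -
    (if (w (swap c d κ) : ℕ) < m then (T c d * T j κ) f w else 0)) := by
  rw [T_apply, Xt_apply]
  simp only [Module.End.mul_apply, T_apply c d]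
  by_cases hc : Cov w c d
  · simp only [hc, if_true, Equiv.Perm.mul_apply]
    refine Finset.sum_congr rfl fun j _ => ?_
    congr!
  · simp [hc]

lemma T_zero_apply {N : ℕ} {a b : Fin N} (h : b ≤ a) (f : Fun N) (w : Equiv.Perm (Fin N)) :
    T a b f w = 0 := by
  rw [T_eq_zero a b (not_lt.2 h)]; rfl

lemma intertwine1 {N : ℕ} (κ v : Fin N) :
    Xt κ ((v : ℕ) + 1) + uop (κ : ℕ) (v : ℕ) = uop ((κ : ℕ) + 1) (v : ℕ) + Xt κ (v : ℕ) := by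
  apply LinearMap.ext; intro f; funext w
  rw [LinearMap.add_apply, LinearMap.add_apply, Pi.add_apply, Pi.add_apply]
  obtain ⟨b, hb⟩ := w.surjective v
  have hb' : (w b : ℕ) = v := by rw [hb]
  have hx : Xt κ ((v : ℕ) + 1) f w - Xt κ (v : ℕ) f w =
      T κ b f w - if κ = b then ∑ j, T j κ f w else 0 := by
    rw [Xt_apply, Xt_apply, ← Finset.sum_sub_distrib]
    have : ∀ j : Fin N, ((if (w j : ℕ) < (v : ℕ) + 1 then T κ j f w else 0) -
        (if (w κ : ℕ) < (v : ℕ) + 1 then T j κ f w else 0)) -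
        ((if (w j : ℕ) < (v : ℕ) then T κ j f w else 0) -
        (if (w κ : ℕ) < (v : ℕ) then T j κ f w else 0)) =
        (if j = b then T κ b f w else 0) - (if κ = b then T j κ f w else 0) := by
      intro j
      have e1 : ∀ x, ((w x : ℕ) < (v : ℕ) + 1) ↔ ((w x : ℕ) < v ∨ x = b) := by
        intro x
        have : x = b ↔ (w x : ℕ) = v := by
          rw [← hb', ← Fin.ext_iff]
          exact w.injective.eq_iff.symm
        rw [this]; omega
      have e2 : ¬ (w b : ℕ) < v := by omega
      simp only [e1]
      by_cases h1 : j = b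
      · subst h1
        by_cases h2 : κ = j
        · subst h2; simp [e2]
        · simp [h2, e2]
      · by_cases h2 : κ = b
        · subst h2; simp [e2, h1]
        · simp [h1, h2]
    rw [Finset.sum_congr rfl fun j _ => this j, Finset.sum_sub_distrib]
    congr 1
    · simp
    · by_cases h2 : κ = b <;> simp [h2]
  rw [uop_eval _ _ f w b hb', uop_eval _ _ f w b hb']
  rw [eq_comm, ← sub_eq_zero]
  have : ∀ A B C D : ℤ, A + B - (C + D) = A - D - (C - B) := by intros; ring
  rw [this, hx]
  rcases lt_trichotomy b κ with h | h | h
  · have h1 : ¬ ((κ : ℕ) ≤ b) := by simpa using h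
    have h2 : ¬ ((κ : ℕ) + 1 ≤ b) := by omega
    have h3 : κ ≠ b := h.ne'
    simp [h1, h2, h3, T_zero_apply h.le]
  · subst h
    have h4 : ∀ a : Fin N, (if (a : ℕ) < (b : ℕ) then T a b f w else 0) = T a b f w := by
      intro a
      split_ifs with h5
      · rfl
      · rw [T_zero_apply (by simpa using h5)]
    simp only [h4]
    simp [T_zero_apply le_rfl]
  · have h1 : ((κ : ℕ) ≤ b) := by exact_mod_cast h.le
    have h2 : ((κ : ℕ) + 1 ≤ b) := by exact_mod_cast h
    have h3 : κ ≠ b := h.ne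
    simp only [h1, h2, h3, if_true, if_false, sub_zero]
    have h4 : ∀ a : Fin N, (if (a : ℕ) < (κ : ℕ) + 1 then T a b f w else 0) =
        (if (a : ℕ) < (κ : ℕ) then T a b f w else 0) + if a = κ then T κ b f w else 0 := by
      intro a
      rcases lt_trichotomy (a : ℕ) (κ : ℕ) with h5 | h5 | h5
      · have : a ≠ κ := fun h => by rw [h] at h5; omega
        have h6 : (a : ℕ) < (κ : ℕ) + 1 := by omega
        simp [h5, this, h6]
      · have : a = κ := Fin.ext h5
        subst this; simp
      · have : a ≠ κ := fun h => by rw [h] at h5; omega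
        have h6 : ¬ (a : ℕ) < (κ : ℕ) + 1 := by omega
        have h7 : ¬ (a : ℕ) < (κ : ℕ) := by omega
        simp [h7, this, h6]
    rw [Finset.sum_congr rfl fun a _ => h4 a, Finset.sum_add_distrib]
    simp

lemma intertwine2 {N : ℕ} (κ v : Fin N) :
    Xt κ ((v : ℕ) + 1) * uop (κ : ℕ) (v : ℕ) = uop ((κ : ℕ) + 1) (v : ℕ) * Xt κ (v : ℕ) := by
  apply LinearMap.ext; intro f; funext w
  rw [Module.End.mul_apply, Module.End.mul_apply]
  obtain ⟨b, hb⟩ := w.surjective v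
  have hb' : (w b : ℕ) = v := by rw [hb]
  have hinj : ∀ x y, (w x : ℕ) = (w y : ℕ) → x = y := fun x y h => w.injective (Fin.ext h)
  rw [uop_eval _ _ _ w b hb', Xt_apply]
  simp only [T_uop _ _ f w b _ _ hb', T_Xt]
  rcases lt_trichotomy b κ with h | h | h
  · have h2 : ¬ ((κ : ℕ) + 1 ≤ b) := by have : (b : ℕ) < κ := h; omega
    rw [if_neg h2]
    refine Finset.sum_eq_zero fun j _ => ?_
    have hbk : ¬ ((κ : ℕ) ≤ b) := by have : (b : ℕ) < κ := h; omega
    rw [sub_eq_zero]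
    trans (0 : ℤ)
    · split_ifs with h3 h4
      · by_cases hj : κ < j
        · exfalso
          rw [swap_apply_of_ne_of_ne h.ne (h.trans hj).ne] at h4
          exact hbk h4
        · refine Finset.sum_eq_zero fun a _ => ?_
          rw [T_eq_zero κ j hj]; simp
      · rfl
      · rfl
    · symm
      split_ifs with h3 h4
      · refine Finset.sum_eq_zero fun a _ => ?_
        by_cases hj : j = b
        · subst hj
          have : ¬ Cov w j κ := by
            rintro ⟨-, h5, -⟩
            have h6 : (w j : ℕ) < (w κ : ℕ) := h5
            omega
          simp [T_apply, this]
        · exfalso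
          rw [swap_apply_of_ne_of_ne (Ne.symm hj) h.ne] at h4
          exact hbk h4
      · rfl
      · rfl
  · subst h
    have h2 : ¬ ((b : ℕ) + 1 ≤ b) := by omega
    rw [if_neg h2]
    refine Finset.sum_eq_zero fun j _ => ?_
    rw [sub_eq_zero]
    trans (0 : ℤ)
    · split_ifs with h3 h4
      · refine Finset.sum_eq_zero fun a _ => ?_
        have : ¬ Cov w b j := by
          rintro ⟨-, h5, -⟩
          have h6 : (w b : ℕ) < (w j : ℕ) := h5
          omega
        simp [T_apply, this]
      · rfl
      · rfl
    · symm
      split_ifs with h3 h4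
      · refine Finset.sum_eq_zero fun a _ => ?_
        rw [swap_apply_right] at h4
        rw [T_eq_zero j b (not_lt.2 (by exact_mod_cast h4))]; simp
      · rfl
      · rfl
  · have hκb : (κ : ℕ) < b := h
    have h2 : ((κ : ℕ) + 1 ≤ b) := h
    rw [if_pos h2]
    -- left side as a double sum
    have hL : ∀ j : Fin N,
        ((if (w j : ℕ) < (v : ℕ) + 1 then (if (κ : ℕ) ≤ (swap κ j b : ℕ) then
          ∑ a : Fin N, (if (a : ℕ) < κ then (T κ j * T a (swap κ j b)) f w else 0) else 0) else 0) -
        (if (w κ : ℕ) < (v : ℕ) + 1 then (if (κ : ℕ) ≤ (swap j κ b : ℕ) then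
          ∑ a : Fin N, (if (a : ℕ) < κ then (T j κ * T a (swap j κ b)) f w else 0) else 0) else 0)) =
        ∑ a : Fin N, if (a : ℕ) < κ then
          ((if (w j : ℕ) < (v : ℕ) + 1 then (T κ j * T a (swap κ j b)) f w else 0) -
           (if (w κ : ℕ) < (v : ℕ) + 1 then (T j κ * T a b) f w else 0)) else 0 := by
      intro j
      have s1 : (κ : ℕ) ≤ (swap κ j b : ℕ) := by
        rw [swap_apply_def]; split_ifs <;> omega
      have s2 : (if (κ : ℕ) ≤ (swap j κ b : ℕ) then
          ∑ a : Fin N, (if (a : ℕ) < κ then (T j κ * T a (swap j κ b)) f w else 0) else 0) =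
          ∑ a : Fin N, (if (a : ℕ) < κ then (T j κ * T a b) f w else 0) := by
        by_cases hj : j = b
        · subst hj
          rw [T_eq_zero j κ (not_lt.2 h.le)]; simp
        · rw [swap_apply_of_ne_of_ne (Ne.symm hj) h.ne', if_pos hκb.le]
      rw [if_pos s1, s2]
      by_cases c1 : (w j : ℕ) < (v : ℕ) + 1 <;> by_cases c2 : (w κ : ℕ) < (v : ℕ) + 1 <;>
        simp only [c1, c2, if_true, if_false, sub_zero, zero_sub, ← Finset.sum_sub_distrib,
          ← Finset.sum_neg_distrib, sub_self]
      · refine Finset.sum_congr rfl fun a _ => ?_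
        split_ifs <;> simp
      · refine Finset.sum_congr rfl fun a _ => ?_
        split_ifs <;> simp
      · simp
    rw [Finset.sum_congr rfl fun j _ => hL j, Finset.sum_comm]
    refine Finset.sum_congr rfl fun a _ => ?_
    rcases lt_trichotomy a κ with ha | ha | ha
    · have ha1 : (a : ℕ) < κ := ha
      have ha2 : (a : ℕ) < (κ : ℕ) + 1 := by omega
      simp only [ha1, ha2, if_true]
      have hsκ : swap a b κ = κ := swap_apply_of_ne_of_ne ha.ne' h.ne
      rw [hsκ, ← sub_eq_zero, ← Finset.sum_sub_distrib]
      have hab := ha.trans h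
      rw [Finset.sum_eq_add a b hab.ne]
      · rw [T_eq_zero κ a (not_lt.2 ha.le), T_eq_zero b κ (not_lt.2 h.le)]
        simp only [swap_apply_right, zero_mul, mul_zero, LinearMap.zero_apply, Pi.zero_apply,
          ite_self, zero_sub, sub_zero]
        have c1 : (w b : ℕ) < (v : ℕ) + 1 := by omega
        rw [if_pos c1]
        have fk := congrFun (congrArg (fun L : Module.End ℤ (Fun N) => L f) (fk2 a κ b ha h)) w
        simp only [LinearMap.add_apply, Pi.add_apply] at fk
        rw [fk]
        have hκv : (w κ : ℕ) ≠ v := fun e => h.ne (hinj _ _ (e.trans hb'.symm))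
        have z1 : (if (w κ : ℕ) < (v : ℕ) + 1 then (T a κ * T a b) f w else 0) =
            (T a κ * T a b) f w := by
          split_ifs with c
          · rfl
          · rw [TT_apply, if_neg]
            rintro ⟨-, -, h5, -⟩
            have h6 : (w κ : ℕ) < (w b : ℕ) := by
              simpa [swap_apply_of_ne_of_ne hab.ne' h.ne'] using h5
            omega
        have z2 : (if (w κ : ℕ) < (v : ℕ) then (T a b * T a κ) f w else 0) = 0 := by
          split_ifs with c
          · rw [TT_apply, if_neg]
            rintro ⟨-, -, h5, -⟩
            have h6 : (w b : ℕ) < (w κ : ℕ) := by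
              simpa [hsκ] using h5
            omega
          · rfl
        rw [z1, z2]
        have c4 : (w a : ℕ) < v ∨ (T a b * T κ b) f w = 0 := by
          by_cases c : (w a : ℕ) < v
          · exact Or.inl c
          · right
            rw [TT_apply, if_neg]
            rintro ⟨⟨-, h5, -⟩, -⟩
            have h6 : (w a : ℕ) < (w b : ℕ) := h5
            omega
        rcases c4 with c4 | c4
        · rw [if_pos c4]; simp
        · rw [c4]; simp
      · rintro j - ⟨hja, hjb⟩
        rw [swap_apply_of_ne_of_ne hja hjb]
        have hjv : (w j : ℕ) ≠ v := fun e => hjb (hinj _ _ (e.trans hb'.symm))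
        have hκv : (w κ : ℕ) ≠ v := fun e => h.ne (hinj _ _ (e.trans hb'.symm))
        have e1 : ((w j : ℕ) < (v : ℕ) + 1) ↔ ((w j : ℕ) < v) := by omega
        have e2 : ((w κ : ℕ) < (v : ℕ) + 1) ↔ ((w κ : ℕ) < v) := by omega
        rw [swap_apply_of_ne_of_ne h.ne' (Ne.symm hjb)]
        rw [TT_comm κ j a b ha.ne' h.ne hja hjb, TT_comm j κ a b hja hjb ha.ne' h.ne]
        simp only [e1, e2, sub_self]
      · simp
      · simp
    · subst ha
      have a1 : ¬ ((a : ℕ) < (a : ℕ)) := by omega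
      simp only [a1, if_false, Finset.sum_const_zero, Nat.lt_succ_self, if_true]
      symm
      refine Finset.sum_eq_zero fun j _ => ?_
      rw [swap_apply_left]
      have a2 : ¬ (w b : ℕ) < (v : ℕ) := by omega
      rw [if_neg a2, sub_zero]
      split_ifs with c
      · rw [TT_apply, if_neg]
        rintro ⟨-, -, h5, -⟩
        have h6 : (w b : ℕ) < (w (swap a b j) : ℕ) := by
          simpa using h5
        omega
      · rfl
    · have ha1 : ¬ (a : ℕ) < κ := by have : (κ : ℕ) < a := ha; omega
      have ha2 : ¬ (a : ℕ) < (κ : ℕ) + 1 := by have : (κ : ℕ) < a := ha; omega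
      simp only [ha1, ha2, if_false, Finset.sum_const_zero]

/-! ### Generating functions of words -/

section Words

variable {A : Type*} [Ring A] (u : ℕ → A)

/-- descending product of `1 + u i X` -/
noncomputable def Ep : ℕ → Polynomial A
  | 0 => 1
  | m + 1 => (1 + Polynomial.C (u m) * Polynomial.X) * Ep m

/-- ascending product of `1 + u i X` -/
noncomputable def Hp : ℕ → Polynomial A
  | 0 => 1
  | m + 1 => Hp m * (1 + Polynomial.C (u m) * Polynomial.X)

/-- words of length `m` with letters `< N` -/
noncomputable def allW (N : ℕ) : ℕ → Finset (List ℕ)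
  | 0 => {[]}
  | m + 1 => (Finset.range N ×ˢ allW N m).image fun x => x.1 :: x.2

lemma mem_allW (N m : ℕ) (L : List ℕ) :
    L ∈ allW N m ↔ L.length = m ∧ ∀ x ∈ L, x < N := by
  induction m generalizing L with
  | zero =>
    simp only [allW, Finset.mem_singleton, List.length_eq_zero_iff]
    constructor
    · rintro rfl; simp
    · exact fun h => h.1
  | succ m ih =>
    simp only [allW, Finset.mem_image, Finset.mem_product, Finset.mem_range, Prod.exists]
    constructor
    · rintro ⟨a, l, ⟨h1, h2⟩, rfl⟩
      rw [ih] at h2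
      simp [h2.1, h1]
      exact h2.2
    · rintro ⟨h1, h2⟩
      cases L with
      | nil => simp at h1
      | cons a l =>
        refine ⟨a, l, ⟨h2 a (by simp), (ih l).2 ⟨by simpa using h1, fun x hx => h2 x (by simp [hx])⟩⟩, rfl⟩

/-- the operator of a word -/
def opw (L : List ℕ) : A := (L.map u).prod

/-- sum over words satisfying a predicate -/
noncomputable def wsum (N m : ℕ) (P : List ℕ → Prop) : A :=
  ∑ L ∈ allW N m, if P L then opw u L else 0

/-- the finite set of words satisfying a predicate -/
noncomputable def wset (N m : ℕ) (P : List ℕ → Prop) : Finset (List ℕ) := (allW N m).filter P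

lemma mem_wset (N m : ℕ) (P : List ℕ → Prop) (L : List ℕ) :
    L ∈ wset N m P ↔ (L.length = m ∧ ∀ x ∈ L, x < N) ∧ P L := by
  simp only [wset, Finset.mem_filter, mem_allW]

lemma wsum_eq_filter (N m : ℕ) (P : List ℕ → Prop) :
    wsum u N m P = ∑ L ∈ wset N m P, opw u L := by
  rw [wsum, wset, Finset.sum_filter]

lemma wsum_congr {N m : ℕ} {P Q : List ℕ → Prop}
    (h : ∀ L : List ℕ, L.length = m → (P L ↔ Q L)) : wsum u N m P = wsum u N m Q := by
  refine Finset.sum_congr rfl fun L hL => ?_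
  rw [mem_allW] at hL
  simp only [h L hL.1]

lemma wsum_length_zero (N : ℕ) (P : List ℕ → Prop) (h : P []) : wsum u N 0 P = 1 := by
  simp [wsum, allW, h, opw]

lemma wsum_bound_zero (m : ℕ) (P : List ℕ → Prop) : wsum u 0 (m + 1) P = 0 := by
  simp [wsum, allW]

lemma Ep_coeff (m q : ℕ) :
    (Ep u m).coeff q = wsum u m q (List.Pairwise fun x y => y < x) := by
  induction m generalizing q with
  | zero =>
    cases q with
    | zero => rw [wsum_length_zero _ _ _ List.Pairwise.nil]; simp [Ep]
    | succ q => rw [wsum_bound_zero]; simp [Ep, Polynomial.coeff_one]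
  | succ m ih =>
    cases q with
    | zero =>
      rw [wsum_length_zero _ _ _ List.Pairwise.nil]
      have := ih 0
      rw [wsum_length_zero _ _ _ List.Pairwise.nil] at this
      simp [Ep, add_mul, mul_assoc, this]
    | succ q =>
      simp only [Ep, add_mul, one_mul, Polynomial.coeff_add, mul_assoc, Polynomial.coeff_C_mul,
        Polynomial.coeff_X_mul]
      rw [ih, ih]
      simp only [wsum_eq_filter]
      have hset : wset (m + 1) (q + 1) (List.Pairwise fun x y => y < x) =
          wset m (q + 1) (List.Pairwise fun x y => y < x) ∪
          (wset m q (List.Pairwise fun x y => y < x)).image (List.cons m) := by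
        ext L
        simp only [mem_wset, Finset.mem_union, Finset.mem_image]
        constructor
        · rintro ⟨⟨h1, h2⟩, h3⟩
          cases L with
          | nil => simp at h1
          | cons a l =>
            rw [List.pairwise_cons] at h3
            have ha := h2 a (by simp)
            by_cases e : a = m
            · subst e
              exact Or.inr ⟨l, ⟨⟨by simpa using h1, h3.1⟩, h3.2⟩, rfl⟩
            · refine Or.inl ⟨⟨h1, ?_⟩, List.pairwise_cons.2 h3⟩
              intro x hx
              rcases List.mem_cons.1 hx with rfl | hx
              · omega
              · have := h3.1 x hx; omega
        · rintro (⟨⟨h1, h2⟩, h3⟩ | ⟨l, ⟨⟨h1, h2⟩, h3⟩, rfl⟩)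
          · exact ⟨⟨h1, fun x hx => (h2 x hx).trans (Nat.lt_succ_self _)⟩, h3⟩
          · refine ⟨⟨by simp [h1], ?_⟩, List.pairwise_cons.2 ⟨h2, h3⟩⟩
            intro x hx
            rcases List.mem_cons.1 hx with rfl | hx
            · omega
            · have := h2 x hx; omega
      rw [hset, Finset.sum_union, Finset.sum_image]
      · congr 1
        rw [Finset.mul_sum]
        refine Finset.sum_congr rfl fun L _ => ?_
        simp [opw]
      · intro x _ y _ h
        simpa using h
      · rw [Finset.disjoint_left]
        rintro L hL hL'
        simp only [mem_wset, Finset.mem_image] at hL hL'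
        obtain ⟨l, -, rfl⟩ := hL'
        exact absurd (hL.1.2 m (by simp)) (lt_irrefl _)

lemma Hp_coeff (m q : ℕ) :
    (Hp u m).coeff q = wsum u m q (List.Pairwise fun x y => x < y) := by
  induction m generalizing q with
  | zero =>
    cases q with
    | zero => rw [wsum_length_zero _ _ _ List.Pairwise.nil]; simp [Hp]
    | succ q => rw [wsum_bound_zero]; simp [Hp, Polynomial.coeff_one]
  | succ m ih =>
    cases q with
    | zero =>
      rw [wsum_length_zero _ _ _ List.Pairwise.nil]
      have := ih 0
      rw [wsum_length_zero _ _ _ List.Pairwise.nil] at this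
      simp [Hp, mul_add, ← mul_assoc, this]
    | succ q =>
      simp only [Hp, mul_add, mul_one, Polynomial.coeff_add, ← mul_assoc, Polynomial.coeff_mul_C,
        Polynomial.coeff_mul_X]
      rw [ih, ih]
      simp only [wsum_eq_filter]
      have hset : wset (m + 1) (q + 1) (List.Pairwise fun x y => x < y) =
          wset m (q + 1) (List.Pairwise fun x y => x < y) ∪
          (wset m q (List.Pairwise fun x y => x < y)).image (fun l => l ++ [m]) := by
        ext L
        simp only [mem_wset, Finset.mem_union, Finset.mem_image]
        constructor
        · rintro ⟨⟨h1, h2⟩, h3⟩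
          rcases List.eq_nil_or_concat L with rfl | ⟨l, a, rfl⟩
          · simp at h1
          · simp only [List.concat_eq_append] at *
            rw [List.pairwise_append] at h3
            have ha := h2 a (by simp)
            have h4 : ∀ x ∈ l, x < a := fun x hx => h3.2.2 x hx a (by simp)
            by_cases e : a = m
            · subst e
              exact Or.inr ⟨l, ⟨⟨by simpa using h1, h4⟩, h3.1⟩, rfl⟩
            · refine Or.inl ⟨⟨h1, ?_⟩, List.pairwise_append.2 h3⟩
              intro x hx
              rcases List.mem_append.1 hx with hx | hx
              · have := h4 x hx; omega
              · have := List.mem_singleton.1 hx; omega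
        · rintro (⟨⟨h1, h2⟩, h3⟩ | ⟨l, ⟨⟨h1, h2⟩, h3⟩, rfl⟩)
          · exact ⟨⟨h1, fun x hx => (h2 x hx).trans (Nat.lt_succ_self _)⟩, h3⟩
          · refine ⟨⟨by simp [h1], ?_⟩, List.pairwise_append.2 ⟨h3, by simp, by simpa using h2⟩⟩
            intro x hx
            rcases List.mem_append.1 hx with hx | hx
            · have := h2 x hx; omega
            · have := List.mem_singleton.1 hx; omega
      rw [hset, Finset.sum_union, Finset.sum_image]
      · congr 1
        rw [Finset.sum_mul]
        refine Finset.sum_congr rfl fun L _ => ?_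
        simp [opw]
      · intro x _ y _ h
        simpa using h
      · rw [Finset.disjoint_left]
        rintro L hL hL'
        simp only [mem_wset, Finset.mem_image] at hL hL'
        obtain ⟨l, -, rfl⟩ := hL'
        exact absurd (hL.1.2 m (by simp)) (lt_irrefl _)

/-- hook words -/
def HookW (R : ℕ → ℕ → Prop) (p : ℕ) (L : List ℕ) : Prop :=
  (L.take p).Pairwise R ∧ (L.drop (p - 1)).Pairwise fun x y => R y x

lemma wsum_mul (N p q : ℕ) (P Q : List ℕ → Prop) :
    wsum u N p P * wsum u N q Q =
      wsum u N (p + q) fun L => P (L.take p) ∧ Q (L.drop p) := by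
  simp only [wsum_eq_filter]
  rw [Finset.sum_mul_sum, ← Finset.sum_product']
  refine Finset.sum_bij' (fun x _ => x.1 ++ x.2) (fun L _ => (L.take p, L.drop p)) ?_ ?_ ?_ ?_ ?_
  · rintro ⟨a, b⟩ h
    simp only [Finset.mem_product, mem_wset] at h ⊢
    obtain ⟨⟨⟨rfl, h2⟩, h3⟩, ⟨rfl, h5⟩, h6⟩ := h
    refine ⟨⟨by simp, ?_⟩, by simpa using h3, by simpa using h6⟩
    intro x hx
    rcases List.mem_append.1 hx with hx | hx
    · exact h2 x hx
    · exact h5 x hx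
  · rintro L h
    simp only [Finset.mem_product, mem_wset] at h ⊢
    obtain ⟨⟨h1, h2⟩, h3, h4⟩ := h
    refine ⟨⟨⟨by simp [h1], fun x hx => h2 x (List.mem_of_mem_take hx)⟩, h3⟩,
      ⟨by simp [h1], fun x hx => h2 x (List.mem_of_mem_drop hx)⟩, h4⟩
  · rintro ⟨a, b⟩ h
    simp only [Finset.mem_product, mem_wset] at h ⊢
    obtain ⟨⟨⟨rfl, h2⟩, h3⟩, ⟨rfl, h5⟩, h6⟩ := h
    simp
  · intro L h
    simp
  · rintro ⟨a, b⟩ h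
    simp [opw]

lemma hook_split (hsq : ∀ v, u v * u v = 0) (R : ℕ → ℕ → Prop)
    (htr : ∀ x y z, R x y → R y z → R x z) (hir : ∀ x, ¬ R x x)
    (htri : ∀ x y, R x y ∨ x = y ∨ R y x) (N p q : ℕ) :
    wsum u N (p + 1) (List.Pairwise R) * wsum u N (q + 1) (List.Pairwise fun x y => R y x) =
      wsum u N (p + q + 2) (HookW R (p + 2)) + wsum u N (p + q + 2) (HookW R (p + 1)) := by
  rw [wsum_mul, show p + 1 + (q + 1) = p + q + 2 by ring, wsum, wsum, wsum,
    ← Finset.sum_add_distrib]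
  refine Finset.sum_congr rfl fun L hL => ?_
  rw [mem_allW] at hL
  obtain ⟨l1, x, y, l2, rfl, hl⟩ : ∃ l1 x y l2, L = l1 ++ x :: y :: l2 ∧ l1.length = p := by
    have h1 := List.take_append_drop p L
    have h2 : (L.drop p).length = q + 2 := by simp [hL.1]; omega
    rcases hd : L.drop p with _ | ⟨x, _ | ⟨y, l2⟩⟩
    · rw [hd] at h2; simp at h2
    · rw [hd] at h2; simp at h2
    · exact ⟨L.take p, x, y, l2, by rw [← hd, h1], by simp [hL.1]; omega⟩
  subst hl
  have e1 : (l1 ++ x :: y :: l2).take (l1.length + 1) = l1 ++ [x] := by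
    simp [List.take_append]
  have e2 : (l1 ++ x :: y :: l2).take (l1.length + 2) = l1 ++ [x, y] := by
    simp [List.take_append]
  have e3 : (l1 ++ x :: y :: l2).drop (l1.length + 1) = y :: l2 := by
    simp [List.drop_append]
  have e4 : (l1 ++ x :: y :: l2).drop l1.length = x :: y :: l2 := by
    simp
  have i1 : HookW R (l1.length + 2) (l1 ++ x :: y :: l2) ↔
      ((l1 ++ [x]).Pairwise R ∧ (y :: l2).Pairwise fun x y => R y x) ∧ R x y := by
    rw [HookW, e2, show l1.length + 2 - 1 = l1.length + 1 by omega, e3]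
    simp only [List.pairwise_append, List.pairwise_cons, List.mem_cons]
    constructor
    · rintro ⟨⟨h1, h2, h3⟩, h4⟩
      refine ⟨⟨⟨h1, by simp, ?_⟩, h4⟩, h2.1 y (by simp)⟩
      intro a ha b hb
      exact h3 a ha b (by simp at hb; simp [hb])
    · rintro ⟨⟨⟨h1, h2, h3⟩, h4⟩, h5⟩
      refine ⟨⟨h1, by simpa using h5, ?_⟩, h4⟩
      intro a ha b hb
      have hax := h3 a ha x (by simp)
      rcases hb with rfl | hb
      · exact hax
      · simp at hb; subst hb; exact htr _ _ _ hax h5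
  have i2 : HookW R (l1.length + 1) (l1 ++ x :: y :: l2) ↔
      ((l1 ++ [x]).Pairwise R ∧ (y :: l2).Pairwise fun x y => R y x) ∧ R y x := by
    rw [HookW, e1, show l1.length + 1 - 1 = l1.length by omega, e4]
    rw [List.pairwise_cons (l := y :: l2), and_assoc]
    refine and_congr_right fun _ => ?_
    constructor
    · rintro ⟨h1, h2⟩
      exact ⟨h2, h1 y (by simp)⟩
    · rintro ⟨h1, h2⟩
      refine ⟨?_, h1⟩
      intro b hb
      rcases List.mem_cons.1 hb with rfl | hb
      · exact h2
      · exact htr _ _ _ ((List.pairwise_cons.1 h1).1 b hb) h2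
  rw [e1, e3]
  simp only [i1, i2]
  by_cases hB : ((l1 ++ [x]).Pairwise R ∧ (y :: l2).Pairwise fun x y => R y x)
  · simp only [hB, true_and, if_true, and_self]
    rcases htri x y with h | h | h
    · have : ¬ R y x := fun h' => hir _ (htr _ _ _ h h')
      simp [h, this]
    · subst h
      have : opw u (l1 ++ x :: x :: l2) = 0 := by
        simp only [opw, List.map_append, List.map_cons, List.prod_append, List.prod_cons]
        rw [← mul_assoc (u x), hsq]; simp
      simp [hir, this]
    · have : ¬ R x y := fun h' => hir _ (htr _ _ _ h h')
      simp [h, this]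
  · simp only [hB, false_and, if_false, add_zero]

lemma hook_symm (hsq : ∀ v, u v * u v = 0) (N : ℕ)
    (hcomm : ∀ p q, (Hp u N).coeff p * (Ep u N).coeff q = (Ep u N).coeff q * (Hp u N).coeff p)
    (q p : ℕ) :
    wsum u N (p + q + 1) (HookW (fun x y => x < y) (p + 1)) =
      wsum u N (p + q + 1) (HookW (fun x y => y < x) (q + 1)) := by
  induction q generalizing p with
  | zero =>
    refine wsum_congr u fun L hL => ?_
    have h1 : ∀ R : ℕ → ℕ → Prop, (L.drop p).Pairwise R := by
      intro R
      have h2 : (L.drop p).length = 1 := by simp [hL]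
      obtain ⟨x, hx⟩ := List.length_eq_one_iff.1 h2
      simp [hx]
    have h3 : ∀ R : ℕ → ℕ → Prop, (L.take 1).Pairwise R := by
      intro R
      have h2 : (L.take 1).length = 1 := by simp [hL]
      obtain ⟨x, hx⟩ := List.length_eq_one_iff.1 h2
      simp [hx]
    have h4 : L.take (p + 1) = L := List.take_of_length_le (by omega)
    simp [HookW, h1, h3, h4]
  | succ q ih =>
    have a := hook_split u hsq (fun x y => x < y) (fun _ _ _ => lt_trans) (fun _ => lt_irrefl _)
      (fun x y => lt_trichotomy x y) N p q
    have b := hook_split u hsq (fun x y => y < x) (fun _ _ _ h h' => lt_trans h' h)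
      (fun _ => lt_irrefl _) (fun x y => by have := lt_trichotomy x y; tauto) N q p
    have c := hcomm (p + 1) (q + 1)
    rw [Hp_coeff, Ep_coeff] at c
    have d := ih (p + 1)
    rw [show p + 1 + q + 1 = p + q + 2 by ring] at d
    rw [show q + p + 2 = p + q + 2 by ring] at b
    have e := a.symm.trans (c.trans b)
    rw [show p + 1 + 1 = p + 2 by ring] at d
    rw [d, add_comm] at e
    exact add_right_cancel e

lemma Ep_coeff_zero (m : ℕ) : (Ep u m).coeff 0 = 1 := by
  rw [Ep_coeff, wsum_length_zero _ _ _ List.Pairwise.nil]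

lemma Hp_mul_Ep (hsq : ∀ v, u v * u v = 0) (m : ℕ) : Hp u m * Ep (fun v => - u v) m = 1 := by
  induction m with
  | zero => simp [Hp, Ep]
  | succ m ih =>
    have : (1 + Polynomial.C (u m) * Polynomial.X) *
        (1 + Polynomial.C (- u m) * Polynomial.X) = 1 := by
      have h2 : Polynomial.C (u m) * Polynomial.X * (Polynomial.C (u m) * Polynomial.X) = 0 := by
        rw [mul_assoc, ← mul_assoc Polynomial.X, Polynomial.X_mul_C, mul_assoc, ← mul_assoc,
          ← Polynomial.C_mul, hsq]
        simp
      rw [Polynomial.C_neg, neg_mul, mul_add, mul_one, mul_neg, add_mul, one_mul, h2]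
      abel
    rw [Hp, Ep, mul_assoc, ← mul_assoc (1 + _), this, one_mul, ih]

end Words
/-! ### Commutation of the row and column operators -/

lemma uop_eq_zero_of_le {N k v : ℕ} (h : N ≤ v) : (uop k v : Module.End ℤ (Fun N)) = 0 := by
  apply LinearMap.ext; intro f; funext w
  rw [uop_apply]
  refine Finset.sum_eq_zero fun a _ => Finset.sum_eq_zero fun b _ => ?_
  rw [if_neg]
  · rintro ⟨-, -, h3⟩
    have := (w b).isLt
    omega

lemma uop_zero {N v : ℕ} : (uop 0 v : Module.End ℤ (Fun N)) = 0 := by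
  apply LinearMap.ext; intro f; funext w
  simp [uop_apply]

lemma uop_large {N k v : ℕ} (h : N ≤ k) : (uop k v : Module.End ℤ (Fun N)) = 0 := by
  apply LinearMap.ext; intro f; funext w
  rw [uop_apply]
  refine Finset.sum_eq_zero fun a _ => Finset.sum_eq_zero fun b _ => ?_
  rw [if_neg]
  · rintro ⟨-, h3, -⟩
    have := b.isLt
    omega

lemma uop_sq {N : ℕ} (k v : ℕ) : (uop k v : Module.End ℤ (Fun N)) * uop k v = 0 := by
  rcases le_or_gt N v with h | h
  · rw [uop_eq_zero_of_le h, zero_mul]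
  apply LinearMap.ext; intro f; funext w
  obtain ⟨b, hb⟩ := w.surjective ⟨v, h⟩
  have hb' : (w b : ℕ) = v := by rw [hb]
  rw [Module.End.mul_apply, uop_eval _ _ _ w b hb']
  simp only [LinearMap.zero_apply, Pi.zero_apply]
  split_ifs with h1
  · refine Finset.sum_eq_zero fun a _ => ?_
    split_ifs with h2
    · rw [T_uop _ _ _ w b a b hb', swap_apply_right, if_neg (by omega)]
    · rfl
  · rfl

lemma quad_eq {A : Type*} [Ring A] (a b c d : A) (h1 : a + b = c + d) (h2 : a * b = c * d) :
    (1 + Polynomial.C a * Polynomial.X) * (1 + Polynomial.C b * Polynomial.X) =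
    (1 + Polynomial.C c * Polynomial.X) * (1 + Polynomial.C d * Polynomial.X) := by
  have key : ∀ a b : A, (1 + Polynomial.C a * Polynomial.X) * (1 + Polynomial.C b * Polynomial.X) =
      1 + Polynomial.C (a + b) * Polynomial.X +
        Polynomial.C (a * b) * (Polynomial.X * Polynomial.X) := by
    intro a b
    have h2 : Polynomial.C a * Polynomial.X * (Polynomial.C b * Polynomial.X) =
        Polynomial.C (a * b) * (Polynomial.X * Polynomial.X) := by
      rw [Polynomial.C_mul, mul_assoc, ← mul_assoc Polynomial.X, Polynomial.X_mul_C, mul_assoc,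
        mul_assoc]
    rw [add_mul, one_mul, mul_add, mul_one, h2, Polynomial.C_add, add_mul]
    abel
  rw [key, key, h1, h2]

lemma Ep_step {N : ℕ} (s : ℤ) (κ : Fin N) (m : ℕ) (hm : m ≤ N) :
    Ep (fun v => s • (uop ((κ : ℕ) + 1) v : Module.End ℤ (Fun N))) m =
      (1 + Polynomial.C (s • Xt κ m) * Polynomial.X) *
        Ep (fun v => s • (uop (κ : ℕ) v : Module.End ℤ (Fun N))) m := by
  induction m with
  | zero => simp [Ep, Xt_zero]
  | succ m ih =>
    rw [Ep, Ep, ih (by omega), ← mul_assoc, ← mul_assoc]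
    have i1 := intertwine1 κ ⟨m, hm⟩
    have i2 := intertwine2 κ ⟨m, hm⟩
    simp only at i1 i2
    rw [quad_eq (s • uop ((κ : ℕ) + 1) m) (s • Xt κ m) (s • Xt κ (m + 1)) (s • uop (κ : ℕ) m)]
    · rw [← smul_add, ← smul_add, ← i1]
    · simp only [smul_mul_assoc, mul_smul_comm]
      rw [← i2]

/-- the commutative algebra generated by the Monk operators -/
noncomputable def Salg (N : ℕ) : Subalgebra ℤ (Module.End ℤ (Fun N)) :=
  Algebra.adjoin ℤ (Set.range (Xop : Fin N → Module.End ℤ (Fun N)))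

lemma Salg_comm {N : ℕ} {x y : Module.End ℤ (Fun N)} (hx : x ∈ Salg N) (hy : y ∈ Salg N) :
    x * y = y * x := by
  have h1 : ∀ b ∈ Salg N, ∀ i, b * Xop i = Xop i * b := by
    intro b hb i
    refine Algebra.adjoin_induction (p := fun b _ => b * Xop i = Xop i * b) ?_ ?_ ?_ ?_ hb
    · rintro _ ⟨j, rfl⟩; exact Xop_comm j i
    · intro r; exact Algebra.commutes r _
    · intro a b _ _ h h'; rw [add_mul, mul_add, h, h']
    · intro a b _ _ h h'; rw [mul_assoc, h', ← mul_assoc, h, mul_assoc]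
  refine Algebra.adjoin_induction (p := fun b _ => x * b = b * x) ?_ ?_ ?_ ?_ hy
  · rintro _ ⟨j, rfl⟩; exact h1 x hx j
  · intro r; exact (Algebra.commutes r x).symm
  · intro a b _ _ h h'; rw [add_mul, mul_add, h, h']
  · intro a b _ _ h h'; rw [mul_assoc, ← h', ← mul_assoc, h, mul_assoc]

lemma one_coeff_mem {N : ℕ} (q : ℕ) :
    (1 : Polynomial (Module.End ℤ (Fun N))).coeff q ∈ Salg N := by
  rw [Polynomial.coeff_one]
  split_ifs
  · exact one_mem _
  · exact zero_mem _

lemma Ep_eq_one {A : Type*} [Ring A] (u : ℕ → A) (h : ∀ v, u v = 0) (m : ℕ) : Ep u m = 1 := by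
  induction m with
  | zero => rfl
  | succ m ih => rw [Ep, ih, h]; simp

lemma Ep_mem {N : ℕ} (s : ℤ) (k q : ℕ) :
    (Ep (fun v => s • (uop k v : Module.End ℤ (Fun N))) N).coeff q ∈ Salg N := by
  induction k generalizing q with
  | zero =>
    rw [Ep_eq_one _ (fun v => by rw [uop_zero, smul_zero])]
    exact one_coeff_mem q
  | succ k ih =>
    rcases le_or_gt N k with h | h
    · rw [Ep_eq_one _ (fun v => by rw [uop_large (by omega), smul_zero])]
      exact one_coeff_mem q
    · have := Ep_step s ⟨k, h⟩ N le_rfl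
      simp only at this
      rw [this, Xt_full, add_mul, one_mul, Polynomial.coeff_add]
      refine add_mem (ih q) ?_
      rw [mul_assoc, Polynomial.coeff_C_mul]
      refine mul_mem ((Salg N).smul_mem (Algebra.subset_adjoin (Set.mem_range_self _)) s) ?_
      cases q with
      | zero => simp
      | succ q => rw [Polynomial.coeff_X_mul]; exact ih q

lemma Hp_mem {N : ℕ} (k q : ℕ) :
    (Hp (fun v => (uop k v : Module.End ℤ (Fun N))) N).coeff q ∈ Salg N := by
  have hE : ∀ j, (Ep (fun v => - (uop k v : Module.End ℤ (Fun N))) N).coeff j ∈ Salg N := by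
    intro j
    have := Ep_mem (N := N) (-1) k j
    simpa using this
  have h1 := Hp_mul_Ep (fun v => (uop k v : Module.End ℤ (Fun N))) (uop_sq k) N
  have h0 := Ep_coeff_zero (fun v => - (uop k v : Module.End ℤ (Fun N))) N
  revert hE h1 h0
  generalize Ep (fun v => - (uop k v : Module.End ℤ (Fun N))) N = E
  generalize Hp (fun v => (uop k v : Module.End ℤ (Fun N))) N = H
  intro hE h1 h0
  induction q using Nat.strong_induction_on with
  | _ q ih =>
    have h2 : (H * E).coeff q ∈ Salg N := by rw [h1]; exact one_coeff_mem q
    rw [Polynomial.coeff_mul, Finset.Nat.sum_antidiagonal_eq_sum_range_succ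
      (fun i j => H.coeff i * E.coeff j), Finset.sum_range_succ, Nat.sub_self, h0, mul_one] at h2
    refine (add_mem_cancel_left ?_).1 h2
    refine sum_mem fun i hi => ?_
    exact mul_mem (ih i (Finset.mem_range.1 hi)) (hE _)

lemma HE_comm {N : ℕ} (k p q : ℕ) :
    (Hp (fun v => (uop k v : Module.End ℤ (Fun N))) N).coeff p *
      (Ep (fun v => (uop k v : Module.End ℤ (Fun N))) N).coeff q =
    (Ep (fun v => (uop k v : Module.End ℤ (Fun N))) N).coeff q *
      (Hp (fun v => (uop k v : Module.End ℤ (Fun N))) N).coeff p := by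
  refine Salg_comm (Hp_mem k p) ?_
  have := Ep_mem (N := N) 1 k q
  simpa using this

lemma uop_hook_symm (N k p q : ℕ) :
    wsum (fun v => (uop k v : Module.End ℤ (Fun N))) N (p + q + 1) (HookW (fun x y => x < y) (p + 1)) =
      wsum (fun v => (uop k v : Module.End ℤ (Fun N))) N (p + q + 1)
        (HookW (fun x y => y < x) (q + 1)) :=
  hook_symm _ (uop_sq k) N (HE_comm k) q p
/-! ### Bridge from words to paths -/

lemma ncard_biUnion_finset {ι α : Type*} (s : Finset ι) (S : ι → Set α)
    (hf : ∀ i ∈ s, (S i).Finite)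
    (hd : ∀ i ∈ s, ∀ j ∈ s, i ≠ j → Disjoint (S i) (S j)) :
    (⋃ i ∈ s, S i).Finite ∧ (⋃ i ∈ s, S i).ncard = ∑ i ∈ s, (S i).ncard := by
  induction s using Finset.induction_on with
  | empty => simp
  | insert a s ha ih =>
    have ih' := ih (fun i hi => hf i (Finset.mem_insert_of_mem hi))
      (fun i hi j hj => hd i (Finset.mem_insert_of_mem hi) j (Finset.mem_insert_of_mem hj))
    have h1 := hf a (Finset.mem_insert_self _ _)
    rw [Finset.set_biUnion_insert]
    refine ⟨h1.union ih'.1, ?_⟩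
    rw [Set.ncard_union_eq _ h1 ih'.1, ih'.2, Finset.sum_insert ha]
    rw [Set.disjoint_iUnion₂_right]
    intro i hi
    exact hd _ (Finset.mem_insert_self _ _) _ (Finset.mem_insert_of_mem hi)
      (fun e => ha (e ▸ hi))

/-- prepend a value to a sequence -/
def consF (x : ℕ) (f : ℕ → ℕ) : ℕ → ℕ
  | 0 => x
  | i + 1 => f i

lemma consF_eta (f : ℕ → ℕ) : f = consF (f 0) (fun i => f (i + 1)) := by
  funext i; cases i <;> rfl

lemma consF_inj {x y : ℕ} {f g : ℕ → ℕ} (h : consF x f = consF y g) : x = y ∧ f = g :=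
  ⟨congrFun h 0, funext fun i => congrFun h (i + 1)⟩

section Bridge

variable {N : ℕ} [NeZero N]

lemma tProd_zero (a b : ℕ → ℕ) : tProd N a b 0 = 1 := rfl

lemma tProd_cons (a b : ℕ) (f g : ℕ → ℕ) (i : ℕ) :
    tProd N (consF a f) (consF b g) (i + 1) = t N a b * tProd N f g i := by
  simp only [tProd, List.range_succ_eq_map, List.map_cons, List.prod_cons, List.map_map]
  rfl

lemma StepOK_cons (k m : ℕ) (w : Equiv.Perm (Fin N)) (a b : ℕ) (f g : ℕ → ℕ) :
    StepOK N k (m + 1) w (consF a f) (consF b g) ↔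
      (1 ≤ a ∧ a ≤ k ∧ k < b ∧ b ≤ N) ∧ len (w * t N a b) = len w + 1 ∧
        StepOK N k m (w * t N a b) f g := by
  constructor
  · rintro ⟨h1, h2⟩
    have h3 := h2 1 (by omega)
    rw [tProd_cons, tProd_zero, mul_one] at h3
    refine ⟨h1 0 (by omega), h3, fun i hi => h1 (i + 1) (by omega), fun i hi => ?_⟩
    have := h2 (i + 1) (by omega)
    rw [tProd_cons, ← mul_assoc] at this
    omega
  · rintro ⟨h0, h1, h2, h3⟩
    refine ⟨fun i hi => ?_, fun i hi => ?_⟩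
    · cases i with
      | zero => exact h0
      | succ i => exact h2 i (by omega)
    · cases i with
      | zero => simp [tProd_zero]
      | succ i =>
        rw [tProd_cons, ← mul_assoc, h3 i (by omega)]
        omega

lemma PathWit_cons (k m : ℕ) (w w' : Equiv.Perm (Fin N)) (a b : ℕ) (f g : ℕ → ℕ) :
    PathWit N k (m + 1) w w' (consF a f, consF b g) ↔
      (1 ≤ a ∧ a ≤ k ∧ k < b ∧ b ≤ N) ∧ len (w * t N a b) = len w + 1 ∧
        PathWit N k m (w * t N a b) w' (f, g) := by
  simp only [PathWit, StepOK_cons, tProd_cons, ← mul_assoc, and_assoc]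
  have : (∀ i, m + 1 ≤ i → consF a f i = 0 ∧ consF b g i = 0) ↔
      ∀ i, m ≤ i → f i = 0 ∧ g i = 0 := by
    constructor
    · intro h i hi; exact h (i + 1) (by omega)
    · intro h i hi
      cases i with
      | zero => omega
      | succ i => exact h i (by omega)
  rw [this]

lemma label_cons_zero (w : Equiv.Perm (Fin N)) (a b : ℕ) (f g : ℕ → ℕ) :
    label w (consF a f) (consF b g) 0 = val (w * t N a b) a := by
  rw [label, tProd_cons, tProd_zero, mul_one]; rfl

lemma label_cons_succ (w : Equiv.Perm (Fin N)) (a b : ℕ) (f g : ℕ → ℕ) (i : ℕ) :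
    label w (consF a f) (consF b g) (i + 1) = label (w * t N a b) f g i := by
  rw [label, tProd_cons, ← mul_assoc]; rfl

/-- paths with prescribed word of labels -/
def QSet (k : ℕ) (L : List ℕ) (w w' : Equiv.Perm (Fin N)) : Set ((ℕ → ℕ) × (ℕ → ℕ)) :=
  {ab | PathWit N k L.length w w' ab ∧
    ∀ i, i < L.length → label w ab.1 ab.2 i = L.getD i 0 + 1}

lemma pos_succ (a : Fin N) : pos N ((a : ℕ) + 1) = a := by
  apply Fin.ext
  simp [pos, Nat.mod_eq_of_lt a.isLt]

lemma t_succ (a b : Fin N) : t N ((a : ℕ) + 1) ((b : ℕ) + 1) = swap a b := by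
  rw [t, pos_succ, pos_succ]

/-- prepend a step -/
def consP (x : Fin N × Fin N) (cd : (ℕ → ℕ) × (ℕ → ℕ)) : (ℕ → ℕ) × (ℕ → ℕ) :=
  (consF ((x.1 : ℕ) + 1) cd.1, consF ((x.2 : ℕ) + 1) cd.2)

lemma consP_inj {x y : Fin N × Fin N} {c d : (ℕ → ℕ) × (ℕ → ℕ)} (h : consP x c = consP y d) :
    x = y ∧ c = d := by
  have h1 := consF_inj (congrArg Prod.fst h)
  have h2 := consF_inj (congrArg Prod.snd h)
  refine ⟨Prod.ext (Fin.ext ?_) (Fin.ext ?_), Prod.ext h1.2 h2.2⟩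
  · have := h1.1; omega
  · have := h2.1; omega

/-- the admissible first steps with label `v` -/
noncomputable def Vset (k v : ℕ) (w : Equiv.Perm (Fin N)) : Finset (Fin N × Fin N) :=
  Finset.univ.filter fun x => ((x.1 : ℕ) < k ∧ k ≤ (x.2 : ℕ) ∧ (w x.2 : ℕ) = v) ∧ Cov w x.1 x.2

lemma QSet_cons (k v : ℕ) (L : List ℕ) (w w' : Equiv.Perm (Fin N)) :
    QSet k (v :: L) w w' =
      ⋃ x ∈ Vset k v w, consP x '' QSet k L (w * swap x.1 x.2) w' := by
  have main : ∀ (x : Fin N × Fin N) cd, consP x cd ∈ QSet k (v :: L) w w' ↔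
      x ∈ Vset k v w ∧ cd ∈ QSet k L (w * swap x.1 x.2) w' := by
    rintro ⟨a, b⟩ ⟨f, g⟩
    have hl : (∀ i, i < L.length + 1 → label w (consF ((a : ℕ) + 1) f) (consF ((b : ℕ) + 1) g) i =
        (v :: L).getD i 0 + 1) ↔ (w b : ℕ) = v ∧
        ∀ i, i < L.length → label (w * swap a b) f g i = L.getD i 0 + 1 := by
      constructor
      · intro h
        constructor
        · have := h 0 (by omega)
          rw [label_cons_zero, t_succ, val, pos_succ] at this
          simpa using this
        · intro i hi
          have := h (i + 1) (by omega)
          rw [label_cons_succ, t_succ] at this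
          simpa using this
      · rintro ⟨h1, h2⟩ i hi
        cases i with
        | zero =>
          rw [label_cons_zero, t_succ, val, pos_succ]
          simpa using h1
        | succ i =>
          rw [label_cons_succ, t_succ, h2 i (by omega)]
          simp
    simp only [QSet, consP, Set.mem_ofPred_eq, List.length_cons, hl, PathWit_cons, t_succ, Vset,
      Finset.mem_filter, Finset.mem_univ, true_and]
    have hb := b.isLt
    constructor
    · rintro ⟨⟨⟨h1, h2, h3, h4⟩, h5, h6⟩, h7, h8⟩
      have hab : a < b := by rw [Fin.lt_def]; omega
      exact ⟨⟨⟨by omega, by omega, h7⟩, (cov_iff w a b hab).1 h5⟩, h6, h8⟩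
    · rintro ⟨⟨⟨h1, h2, h3⟩, h4⟩, h5, h6⟩
      exact ⟨⟨⟨by omega, by omega, by omega, by omega⟩, (cov_iff w a b h4.1).2 h4, h5⟩, h3, h6⟩
  ext ab
  simp only [Set.mem_iUnion, Set.mem_image, exists_prop]
  constructor
  · intro h
    obtain ⟨x, cd, rfl⟩ : ∃ x cd, ab = consP x cd := by
      have h1 := h.1.1.1 0 (by simp)
      refine ⟨((⟨ab.1 0 - 1, by omega⟩ : Fin N), (⟨ab.2 0 - 1, by omega⟩ : Fin N)),
        (fun i => ab.1 (i + 1), fun i => ab.2 (i + 1)), ?_⟩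
      refine Prod.ext ?_ ?_
      · simp only [consP]
        rw [Nat.sub_add_cancel (h1.1)]
        exact consF_eta _
      · simp only [consP]
        rw [Nat.sub_add_cancel (by omega : 1 ≤ ab.2 0)]
        exact consF_eta _
    have := (main x cd).1 h
    exact ⟨x, this.1, cd, this.2, rfl⟩
  · rintro ⟨x, hx, cd, hcd, rfl⟩
    exact (main x cd).2 ⟨hx, hcd⟩

/-- indicator function of a permutation -/
noncomputable def dl (w' : Equiv.Perm (Fin N)) : Fun N := fun w => if w' = w then 1 else 0

lemma QSet_card (k : ℕ) (L : List ℕ) (w w' : Equiv.Perm (Fin N)) :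
    (QSet k L w w').Finite ∧ ((QSet k L w w').ncard : ℤ) =
      (opw (fun v => (uop k v : Module.End ℤ (Fun N))) L) (dl w') w := by
  induction L generalizing w with
  | nil =>
    have : QSet k [] w w' = if w' = w then {((fun _ => 0), (fun _ => 0))} else ∅ := by
      ext ab
      simp only [QSet, PathWit, StepOK, List.length_nil, Set.mem_ofPred_eq, tProd_zero, mul_one]
      split_ifs with h
      · simp only [Set.mem_singleton_iff]
        constructor
        · rintro ⟨⟨-, -, h2⟩, -⟩
          refine Prod.ext (funext fun i => (h2 i (by omega)).1) (funext fun i => (h2 i (by omega)).2)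
        · rintro rfl
          refine ⟨⟨⟨by simp, ?_⟩, h, by simp⟩, by simp⟩
          intro i hi
          obtain rfl : i = 0 := by omega
          simp [tProd_zero]
      · simp [h]
    rw [this]
    simp only [opw, List.map_nil, List.prod_nil, Module.End.one_apply, dl]
    split_ifs <;> simp
  | cons v L ih =>
    rw [QSet_cons]
    have := ncard_biUnion_finset (Vset k v w)
      (fun x => consP x '' QSet k L (w * swap x.1 x.2) w')
      (fun x _ => (ih _).1.image _) (by
        intro x _ y _ hxy
        rw [Set.disjoint_left]
        rintro _ ⟨c, -, rfl⟩ ⟨d, -, hd⟩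
        exact hxy (consP_inj hd).1.symm)
    refine ⟨this.1, ?_⟩
    rw [this.2]
    have e : opw (fun v => (uop k v : Module.End ℤ (Fun N))) (v :: L) =
        uop k v * opw (fun v => (uop k v : Module.End ℤ (Fun N))) L := by
      simp [opw]
    rw [e, Module.End.mul_apply, uop_apply, ← Finset.sum_product', Vset, Finset.sum_filter,
      Finset.univ_product_univ]
    push_cast
    refine Finset.sum_congr rfl fun x _ => ?_
    rw [T_apply, Set.ncard_image_of_injective _ fun c d h => (consP_inj h).2, (ih _).2]
    by_cases h1 : ((x.1 : ℕ) < k ∧ k ≤ (x.2 : ℕ) ∧ (w x.2 : ℕ) = v) <;>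
      by_cases h2 : Cov w x.1 x.2 <;> simp [h1, h2]

lemma label_bound (w : Equiv.Perm (Fin N)) (a b : ℕ → ℕ) (i : ℕ) :
    1 ≤ label w a b i ∧ label w a b i ≤ N := by
  simp only [label, val]
  have := (((w * tProd N a b (i + 1)) (pos N (a i)))).isLt
  omega

lemma paths_card (k m : ℕ) (w w' : Equiv.Perm (Fin N)) (P : List ℕ → Prop) :
    (({ab | PathWit N k m w w' ab ∧
      P ((List.range m).map fun i => label w ab.1 ab.2 i - 1)} :
        Set ((ℕ → ℕ) × (ℕ → ℕ))).ncard : ℤ) =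
      (wsum (fun v => (uop k v : Module.End ℤ (Fun N))) N m P) (dl w') w := by
  have hset : ({ab | PathWit N k m w w' ab ∧
      P ((List.range m).map fun i => label w ab.1 ab.2 i - 1)} :
        Set ((ℕ → ℕ) × (ℕ → ℕ))) = ⋃ L ∈ wset N m P, QSet k L w w' := by
    ext ab
    simp only [Set.mem_ofPred_eq, Set.mem_iUnion, exists_prop, mem_wset]
    constructor
    · rintro ⟨h1, h2⟩
      refine ⟨_, ⟨⟨by simp, ?_⟩, h2⟩, ?_⟩
      · intro x hx
        obtain ⟨i, -, rfl⟩ := List.mem_map.1 hx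
        have := label_bound w ab.1 ab.2 i
        omega
      · refine ⟨by simpa using h1, ?_⟩
        intro i hi
        have hi' : i < m := by simpa using hi
        have := label_bound w ab.1 ab.2 i
        simp [List.getD_eq_getElem?_getD, hi']
        omega
    · rintro ⟨L, ⟨⟨rfl, h1⟩, h2⟩, h3, h4⟩
      refine ⟨h3, ?_⟩
      have : ((List.range L.length).map fun i => label w ab.1 ab.2 i - 1) = L := by
        apply List.ext_getElem
        · simp
        · intro i hi hi'
          simp [h4 i hi', hi']
      rw [this]
      exact h2
  have := ncard_biUnion_finset (wset N m P) (fun L => QSet k L w w')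
    (fun L _ => (QSet_card k L w w').1) (by
      intro L hL L' hL' hne
      rw [mem_wset] at hL hL'
      rw [Set.disjoint_left]
      rintro ab ⟨h1, h2⟩ ⟨h3, h4⟩
      apply hne
      apply List.ext_getElem
      · rw [hL.1.1, hL'.1.1]
      · intro i hi hi'
        have e1 := h2 i hi
        have e2 := h4 i hi'
        rw [List.getD_eq_getElem _ _ hi] at e1
        rw [List.getD_eq_getElem _ _ hi'] at e2
        omega)
  rw [hset, this.2, wsum_eq_filter]
  rw [Nat.cast_sum, LinearMap.sum_apply, Finset.sum_apply]
  exact Finset.sum_congr rfl fun L _ => (QSet_card k L w w').2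

lemma hook_label_iff (R : ℕ → ℕ → Prop) (hR : ∀ x y, R (x + 1) (y + 1) ↔ R x y)
    (w : Equiv.Perm (Fin N)) (a b : ℕ → ℕ) (m p : ℕ) (hp : p ≤ m) :
    HookW R p ((List.range m).map fun i => label w a b i - 1) ↔
      (∀ i j, i < j → j < p → R (label w a b i) (label w a b j)) ∧
      (∀ i j, p - 1 ≤ i → i < j → j < m → R (label w a b j) (label w a b i)) := by
  have hR' : ∀ i j, R (label w a b i - 1) (label w a b j - 1) ↔
      R (label w a b i) (label w a b j) := by
    intro i j
    have h1 := label_bound w a b i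
    have h2 := label_bound w a b j
    rw [← hR, Nat.sub_add_cancel h1.1, Nat.sub_add_cancel h2.1]
  rw [HookW, List.pairwise_iff_getElem, List.pairwise_iff_getElem]
  simp only [List.length_take, List.length_drop, List.length_map, List.length_range,
    List.getElem_take, List.getElem_drop, List.getElem_map, List.getElem_range, hR']
  refine and_congr ?_ ?_
  · constructor
    · intro h i j hij hj
      exact h i j (by omega) (by omega) hij
    · intro h i j hi hj hij
      exact h i j hij (by omega)
  · constructor
    · intro h i j hi hij hj
      have := h (i - (p - 1)) (j - (p - 1)) (by omega) (by omega) (by omega)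
      rwa [show p - 1 + (i - (p - 1)) = i by omega, show p - 1 + (j - (p - 1)) = j by omega] at this
    · intro h i j hi hj hij
      exact h _ _ (by omega) (by omega) (by omega)

end Bridge
/-- If `ℓ(w') - ℓ(w) = p + q - 1 = m`, the number of paths of length `m` in the
`k`-Bruhat order from `w` to `w'` whose labels increase for the first `p` steps and
then decrease equals the number of such paths whose labels decrease for the
first `q` steps and then increase (paths being encoded by their normalized
sequences of transpositions; here the paper's `n` is `n+1`). -/
theorem hook_path_count_symmetry (n k p q : ℕ) (hk : 1 ≤ k) (hp : 1 ≤ p) (hq : 1 ≤ q)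
    (w w' : Equiv.Perm (Fin (n + 1)))
    (hlen : len w' = len w + (p + q - 1)) :
    (IncDecPaths (n + 1) k (p + q - 1) p w w').ncard =
      (DecIncPaths (n + 1) k (p + q - 1) q w w').ncard := by
  obtain ⟨p, rfl⟩ : ∃ p', p = p' + 1 := ⟨p - 1, by omega⟩
  obtain ⟨q, rfl⟩ : ∃ q', q = q' + 1 := ⟨q - 1, by omega⟩
  have hm : p + 1 + (q + 1) - 1 = p + q + 1 := by omega
  rw [hm]
  have h1 := paths_card k (p + q + 1) w w' (HookW (fun x y => x < y) (p + 1))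
  have h2 := paths_card k (p + q + 1) w w' (HookW (fun x y => y < x) (q + 1))
  rw [uop_hook_symm, ← h2] at h1
  have h3 := Nat.cast_injective h1
  have e1 : ∀ a b : ℕ → ℕ, _ := fun a b => hook_label_iff (fun x y => x < y) (by simp) w a b
    (p + q + 1) (p + 1) (by omega)
  have e2 : ∀ a b : ℕ → ℕ, _ := fun a b => hook_label_iff (fun x y => y < x) (by simp) w a b
    (p + q + 1) (q + 1) (by omega)
  simp only [e1, e2] at h3
  exact h3

end SchubertPieri
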